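/- arXiv:2507.16435 — 2 statements merged into one kernel-verified Lean document; each statement's English description precedes it below -/
import Mathlib

section
/- Let k be a differential field of characteristic zero whose field of constants C is algebraically closed, and let k ⊂ K ⊆ E be differential fields such that E is an iterated strongly normal extension of k, i.e., there is a tower of differential fields k = E₀ ⊆ E₁ ⊆ ⋯ ⊆ Eₙ = E in which each Eᵢ is a strongly normal extension of Eᵢ₋₁. Then K can be resolved into a tower of differential fields k = K₀ ⊂ K₁ ⊂ ⋯ ⊂ K_m = K such that for every i = 1,…,m there exist a strongly normal extension F of Kᵢ₋₁ and a differential field embedding of Kᵢ into F fixing Kᵢ₋₁ pointwise. -/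
universe u

/-- A bundled differential field of characteristic zero: a field together with a derivation,
given as a raw function satisfying additivity and the Leibniz rule. -/
structure DFld : Type (u + 1) where
  carrier : Type u
  [fieldInst : Field carrier]
  [charZeroInst : CharZero carrier]
  deriv : carrier → carrier
  deriv_add : ∀ a b, deriv (a + b) = deriv a + deriv b
  deriv_mul : ∀ a b, deriv (a * b) = deriv a * b + a * deriv b

attribute [instance] DFld.fieldInst DFld.charZeroInst

/-- The result of applying the monic linear differential operator
`∂^n + a_{n-1} ∂^{n-1} + ⋯ + a_1 ∂ + a_0` (with coefficients `a`) to `y`,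
where the derivation is given by `D`. -/
def LApply {E : Type u} [Field E] (D : E → E) (n : ℕ) (a : Fin n → E) (y : E) : E :=
  D^[n] y + ∑ i : Fin n, a i * D^[(i : ℕ)] y

/-- `diffGen D k S` is the smallest differential subfield (w.r.t. the derivation `D`)
containing the subfield `k` and the set `S`; i.e. the differential field `k⟨S⟩`. -/
def diffGen {E : Type u} [Field E] (D : E → E) (k : Subfield E) (S : Set E) : Subfield E :=
  sInf {F : Subfield E | k ≤ F ∧ S ⊆ ↑F ∧ ∀ x ∈ F, D x ∈ F}

/-- The subfield of constants of a differential subfield `k`: `{x ∈ k | D x = 0}`. -/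
def constantsOf {E : Type u} [Field E] (D : Derivation ℤ E E) (k : Subfield E) : Subfield E where
  carrier := {x | x ∈ k ∧ D x = 0}
  zero_mem' := ⟨k.zero_mem, map_zero D⟩
  one_mem' := ⟨k.one_mem, D.map_one_eq_zero⟩
  add_mem' := by
    rintro a b ⟨hak, ha0⟩ ⟨hbk, hb0⟩
    exact ⟨k.add_mem hak hbk, by rw [map_add, ha0, hb0, add_zero]⟩
  neg_mem' := by
    rintro a ⟨hak, ha0⟩
    exact ⟨k.neg_mem hak, by rw [map_neg, ha0, neg_zero]⟩
  mul_mem' := by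
    rintro a b ⟨hak, ha0⟩ ⟨hbk, hb0⟩
    exact ⟨k.mul_mem hak hbk, by
      rw [Derivation.leibniz, ha0, hb0, smul_zero, smul_zero, add_zero]⟩
  inv_mem' := by
    rintro x ⟨hxk, hx0⟩
    refine ⟨k.inv_mem hxk, ?_⟩
    by_cases h : x = 0
    · simp [h]
    · have h1 : D (x * x⁻¹) = 0 := by rw [mul_inv_cancel₀ h, D.map_one_eq_zero]
      rw [Derivation.leibniz, hx0, smul_zero, add_zero, smul_eq_mul] at h1
      exact (mul_eq_zero.mp h1).resolve_left h

/-- `F` is a Picard–Vessiot extension of `k` (inside a common differential field) for the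
monic linear differential operator of order `n` with (lower-order) coefficients `a`:
both are differential subfields, the constants of `F` equal the constants of `k`,
the coefficients lie in `k`, and `F` is differentially generated over `k` by an
`n`-dimensional vector space (over the constants) of solutions. -/
def IsPVWith {E : Type u} [Field E] (D : E → E) (k F : Subfield E) (n : ℕ)
    (a : Fin n → E) : Prop :=
  k ≤ F ∧ (∀ x ∈ k, D x ∈ k) ∧ (∀ x ∈ F, D x ∈ F) ∧
  (∀ x ∈ F, D x = 0 → x ∈ k) ∧
  (∀ i, a i ∈ k) ∧
  ∃ y : Fin n → E,
    (∀ i, y i ∈ F) ∧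
    (∀ i, LApply D n a (y i) = 0) ∧
    (∀ c : Fin n → E, (∀ i, c i ∈ k ∧ D (c i) = 0) → (∑ i, c i * y i) = 0 → ∀ i, c i = 0) ∧
    diffGen D k (Set.range y) = F

/-- `F` is a Picard–Vessiot extension of `k` for some monic linear differential operator. -/
def IsPV {E : Type u} [Field E] (D : E → E) (k F : Subfield E) : Prop :=
  ∃ (n : ℕ) (a : Fin n → E), IsPVWith D k F n a

/-- Relative version: the differential subfield `F` is a Picard–Vessiot extension
of the differential subfield `kb ≤ F`. -/
def IsPVRel {E : Type u} [Field E] (D : E → E) (kb F : Subfield E)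
    (hF : ∀ x ∈ F, D x ∈ F) : Prop :=
  IsPV (fun x : ↥F => (⟨D ↑x, hF ↑x x.2⟩ : ↥F)) (Subfield.comap F.subtype kb) ⊤

/-- The ambient differential field (with derivation `D`) is a strongly normal extension of
its differential subfield `k`: it is finitely generated as a field extension of `k`, has no
new constants, and every differential embedding over `k` into a differential field extension
`M` lands in the compositum of the image of the base copy with the constants of `M`. -/
def IsSN {E : Type u} [Field E] (D : E → E) (k : Subfield E) : Prop :=
  (∀ x ∈ k, D x ∈ k) ∧
  (∃ s : Finset E, Subfield.closure (↑k ∪ ↑s) = (⊤ : Subfield E)) ∧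
  (∀ x : E, D x = 0 → x ∈ k) ∧
  ∀ (M : DFld.{u}) (ι σ : E →+* M.carrier),
    (∀ x, ι (D x) = M.deriv (ι x)) →
    (∀ x, σ (D x) = M.deriv (σ x)) →
    (∀ x ∈ k, σ x = ι x) →
    ∀ e : E, σ e ∈ Subfield.closure (Set.range ι ∪ {m : M.carrier | M.deriv m = 0})

/-- Relative version: the differential subfield `F` is a strongly normal extension of the
differential subfield `kb ≤ F`. -/
def IsSNRel {E : Type u} [Field E] (D : E → E) (kb F : Subfield E)
    (hF : ∀ x ∈ F, D x ∈ F) : Prop :=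
  IsSN (fun x : ↥F => (⟨D ↑x, hF ↑x x.2⟩ : ↥F)) (Subfield.comap F.subtype kb)

/-- `K` is a finite field extension of the subfield `M`. -/
def FinExt {E : Type u} [Field E] (M K : Subfield E) : Prop :=
  ∃ h : M ≤ K,
    letI : Algebra ↥M ↥K := (Subfield.inclusion h).toAlgebra
    Module.Finite ↥M ↥K

/-- The transcendence degree of the subfield `K` over the subfield `k`, as the supremum of the
cardinalities of subsets of `K` that are algebraically independent over `k`. -/
noncomputable def trdegOf {E : Type u} [Field E] (k K : Subfield E) : Cardinal.{u} :=
  ⨆ s : {s : Set E // s ⊆ (K : Set E) ∧ AlgebraicIndependent ↥k (fun x : ↥s => (x : E))},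
    Cardinal.mk ↥(s.1)

/-- `K` and `M` are free over `k`: every finite subset of `K` that is algebraically
independent over `k` remains algebraically independent over `M`. -/
def FreeOver {E : Type u} [Field E] (k K M : Subfield E) : Prop :=
  ∀ s : Finset E, (↑s : Set E) ⊆ (K : Set E) →
    AlgebraicIndependent ↥k (fun x : ↥(↑s : Set E) => (x : E)) →
    AlgebraicIndependent ↥M (fun x : ↥(↑s : Set E) => (x : E))

/-- `K` is a `k`-irreducible differential field: it is a finitely generated differential field
extension of `k` of transcendence degree at least 1, and every intermediate differential field
`k ⊂ M ⊆ K` has transcendence degree `0` or `trdeg(K|k)` over `k`. -/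
def IsIrred {E : Type u} [Field E] (D : E → E) (k K : Subfield E) : Prop :=
  (∃ s : Finset E, diffGen D k ↑s = K) ∧
  1 ≤ trdegOf k K ∧
  ∀ M : Subfield E, (∀ x ∈ M, D x ∈ M) → k < M → M ≤ K →
    trdegOf k M = 0 ∨ trdegOf k M = trdegOf k K

/-- `Kf` is a `d`-solvable extension of `k`: there is a tower of differential fields starting
at (a copy of) `k`, each step being a finite algebraic extension or a Picard–Vessiot extension
for an operator of order at most `d`, whose top contains (the copy of) `Kf`. -/
def IsDSolvable {E : Type u} [Field E] (D : E → E) (k Kf : Subfield E) (d : ℕ) : Prop :=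
  ∃ (Ω : DFld.{u}) (j : E →+* Ω.carrier),
    (∀ x, j (D x) = Ω.deriv (j x)) ∧
    ∃ (r : ℕ) (T : Fin (r + 1) → Subfield Ω.carrier),
      T 0 = Subfield.map j k ∧
      Subfield.map j Kf ≤ T (Fin.last r) ∧
      (∀ i, ∀ x ∈ T i, Ω.deriv x ∈ T i) ∧
      ∀ i : Fin r,
        FinExt (T i.castSucc) (T i.succ) ∨
        ∃ n ≤ d, ∃ a : Fin n → Ω.carrier, IsPVWith Ω.deriv (T i.castSucc) (T i.succ) n a

/-- `Kn` is generated over `kb`, as a differential field with the same constants, by one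
solution `z` of an inhomogeneous equation `L(y) = b` (with `L` monic over `kb` of order
`n ≤ d` and `b ∈ kb`) together with an `n`-dimensional space (over the constants) of
solutions of `L(y) = 0`. -/
def IsPVInhomLe {E : Type u} [Field E] (D : E → E) (kb Kn : Subfield E) (d : ℕ) : Prop :=
  kb ≤ Kn ∧ (∀ x ∈ kb, D x ∈ kb) ∧ (∀ x ∈ Kn, D x ∈ Kn) ∧
  (∀ x ∈ Kn, D x = 0 → x ∈ kb) ∧
  ∃ n, n ≤ d ∧ ∃ (a : Fin n → E) (b z : E) (y : Fin n → E),
    (∀ i, a i ∈ kb) ∧ b ∈ kb ∧ z ∈ Kn ∧ (∀ i, y i ∈ Kn) ∧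
    LApply D n a z = b ∧
    (∀ i, LApply D n a (y i) = 0) ∧
    (∀ c : Fin n → E, (∀ i, c i ∈ kb ∧ D (c i) = 0) → (∑ i, c i * y i) = 0 → ∀ i, c i = 0) ∧
    diffGen D kb (insert z (Set.range y)) = Kn

/-- `Kf` is a `d⁺`-solvable extension of `k`. -/
def IsDPlusSolvable {E : Type u} [Field E] (D : E → E) (k Kf : Subfield E) (d : ℕ) : Prop :=
  ∃ (Ω : DFld.{u}) (j : E →+* Ω.carrier),
    (∀ x, j (D x) = Ω.deriv (j x)) ∧
    ∃ (r : ℕ) (T : Fin (r + 1) → Subfield Ω.carrier),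
      T 0 = Subfield.map j k ∧
      Subfield.map j Kf ≤ T (Fin.last r) ∧
      (∀ i, ∀ x ∈ T i, Ω.deriv x ∈ T i) ∧
      ∀ i : Fin r,
        FinExt (T i.castSucc) (T i.succ) ∨ IsPVInhomLe Ω.deriv (T i.castSucc) (T i.succ) d

/-- `TSet D kb K` is the set of elements of `K` annihilated by some monic linear differential
operator with coefficients in `kb`. -/
def TSet {E : Type u} [Field E] (D : E → E) (kb K : Subfield E) : Set E :=
  {x | x ∈ K ∧ ∃ (n : ℕ) (a : Fin n → E), (∀ i, a i ∈ kb) ∧ LApply D n a x = 0}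

/-!
Let `k ⊆ E₁` be the first step of the tower and `k ⊂ K`. If `K ∩ E₁ ≠ k`, this intersection is the
first step of the resolution of `K`. Otherwise, by induction on the length of the tower, the field
`E₁` has a proper extension inside `K E₁` that embeds in a strongly normal extension of `E₁`. Inside
`K E₁` there is a greatest such extension `L`, which is therefore stable under the automorphisms of
`K E₁` over `K`. Hence `K` and `L` are linearly disjoint over `K ∩ L`, so that `L = (K ∩ L) E₁` and
`k ⊂ K ∩ L`. If `N` is strongly normal over `E₁` and contains `L`, the conjugates of `K ∩ L` under
the automorphisms of `N` over `E₁` generate a strongly normal extension of `k`. The resolution stops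
after finitely many steps because the intermediate fields satisfy the ascending chain condition.

The Galois correspondence this rests on is obtained by specializing differential fields without
creating constants. A strongly normal extension survives specialization because the specializations
injective on it are already recognized on finitely many elements; otherwise an ultraproduct of
counterexamples would give an everywhere defined one, which is excluded by transcendence degree.
-/

open scoped Differential TensorProduct

namespace DFld

/-- Homomorphisms of differential rings. -/
structure DHom (R S : Type*) [CommRing R] [CommRing S] [Differential R] [Differential S]
    extends R →+* S where
  map_deriv' : ∀ x, toFun x′ = (toFun x)′

infixr:25 "→ᵈ" => DHom

namespace DHom

variable {R S T : Type*} [CommRing R] [CommRing S] [CommRing T]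
  [Differential R] [Differential S] [Differential T]

instance : FunLike (R →ᵈ S) R S where
  coe f := f.toRingHom
  coe_injective f g h := by
    cases f; cases g; congr; exact DFunLike.coe_injective h

instance : RingHomClass (R →ᵈ S) R S where
  map_add f := map_add f.toRingHom
  map_mul f := map_mul f.toRingHom
  map_one f := map_one f.toRingHom
  map_zero f := map_zero f.toRingHom

@[simp]
theorem map_deriv (f : R →ᵈ S) (x : R) : f x′ = (f x)′ := f.map_deriv' x

@[ext]
theorem ext {f g : R →ᵈ S} (h : ∀ x, f x = g x) : f = g := DFunLike.ext _ _ h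

/-- The identity as a homomorphism of differential rings. -/
def id (R : Type*) [CommRing R] [Differential R] : R →ᵈ R := ⟨.id R, fun _ ↦ rfl⟩

/-- Composition of homomorphisms of differential rings. -/
def comp (g : S →ᵈ T) (f : R →ᵈ S) : R →ᵈ T :=
  ⟨g.toRingHom.comp f.toRingHom, fun x ↦ (congrArg g (f.map_deriv x)).trans (g.map_deriv _)⟩

end DHom

/-- The differential ring structure given by an additive map satisfying the Leibniz rule. -/
abbrev differentialOfLeibniz {R : Type*} [CommRing R] (d : R →+ R)
    (hd : ∀ a b, d (a * b) = a * d b + b * d a) : Differential R :=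
  ⟨Derivation.mk' d.toIntLinearMap hd⟩

theorem leibniz {R : Type*} [CommRing R] [Differential R] (a b : R) :
    (a * b)′ = a * b′ + b * a′ :=
  Derivation.leibniz _ a b

section Ideals

variable {R S : Type*} [CommRing R] [Differential R] [CommRing S] [Differential S]

/-- Ideals stable under the derivation. -/
def IsDiffIdeal (I : Ideal R) : Prop := ∀ x ∈ I, x′ ∈ I

theorem isDiffIdeal_ker (f : R →ᵈ S) : IsDiffIdeal (RingHom.ker f) := fun x hx ↦ by
  rw [RingHom.mem_ker] at hx ⊢
  rw [f.map_deriv, hx, map_zero]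

theorem IsDiffIdeal.comap {J : Ideal S} (hJ : IsDiffIdeal J) (f : R →ᵈ S) :
    IsDiffIdeal (J.comap f) := fun x hx ↦ by
  rw [Ideal.mem_comap, f.map_deriv]
  exact hJ _ hx

/-- The derivation induced on the quotient by a differential ideal. -/
noncomputable abbrev quotientDifferential {I : Ideal R} (hI : IsDiffIdeal I) :
    Differential (R ⧸ I) :=
  differentialOfLeibniz (QuotientAddGroup.map I.toAddSubgroup I.toAddSubgroup
    (Differential.deriv : Derivation ℤ R R).toLinearMap.toAddMonoidHom hI) fun a b ↦ by
      obtain ⟨a, rfl⟩ := Ideal.Quotient.mk_surjective a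
      obtain ⟨b, rfl⟩ := Ideal.Quotient.mk_surjective b
      exact congrArg (Ideal.Quotient.mk I) (Derivation.leibniz _ a b)

/-- Differentially simple rings: the nonzero differential rings without proper nonzero
differential ideals. -/
structure IsDiffSimple (R : Type*) [CommRing R] [Differential R] : Prop where
  nontrivial : Nontrivial R
  eq_bot_or_eq_top : ∀ I : Ideal R, IsDiffIdeal I → I = ⊥ ∨ I = ⊤

theorem IsDiffSimple.injective (hR : IsDiffSimple R) [Nontrivial S] (f : R →ᵈ S) :
    Function.Injective f :=
  (RingHom.injective_iff_ker_eq_bot f).2 <|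
    (hR.eq_bot_or_eq_top _ (isDiffIdeal_ker f)).resolve_right (RingHom.ker_ne_top f)

end Ideals

section Localization

variable {R : Type*} [CommRing R] [Differential R]

/-- The ring homomorphism `r ↦ f r + f r′ ε` into the dual numbers. -/
def dualNumberHom {A : Type*} [CommRing A] (f : R →+* A) : R →+* TrivSqZeroExt A A where
  toFun r := .inl (f r) + .inr (f r′)
  map_one' := by simp
  map_zero' := by simp
  map_add' a b := by ext <;> simp
  map_mul' a b := by ext <;> simp [mul_comm]

@[simp]
theorem fst_dualNumberHom {A : Type*} [CommRing A] (f : R →+* A) (r : R) :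
    (dualNumberHom f r).fst = f r := by simp [dualNumberHom]

@[simp]
theorem snd_dualNumberHom {A : Type*} [CommRing A] (f : R →+* A) (r : R) :
    (dualNumberHom f r).snd = f r′ := by simp [dualNumberHom]

variable (W : Submonoid R)

/-- The extension of `dualNumberHom` to the localization; its infinitesimal part is the
derivation of the localization. -/
noncomputable def localizationDualNumberHom :
    Localization W →+* TrivSqZeroExt (Localization W) (Localization W) :=
  IsLocalization.lift (M := W) (g := dualNumberHom (algebraMap R (Localization W))) fun w ↦ by
    rw [TrivSqZeroExt.isUnit_iff_isUnit_fst]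
    simpa using IsLocalization.map_units (Localization W) w

theorem localizationDualNumberHom_algebraMap (r : R) :
    localizationDualNumberHom W (algebraMap R _ r) = dualNumberHom (algebraMap R _) r :=
  IsLocalization.lift_eq _ r

@[simp]
theorem fst_localizationDualNumberHom (x : Localization W) :
    (localizationDualNumberHom W x).fst = x := by
  have h : (TrivSqZeroExt.fstHom (Localization W) (Localization W) (Localization W)).toRingHom.comp
      (localizationDualNumberHom W) = RingHom.id _ :=
    IsLocalization.ringHom_ext W (by
      ext r; simp [localizationDualNumberHom_algebraMap])
  exact congrArg (· x) h

noncomputable instance : Differential (Localization W) :=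
  differentialOfLeibniz
    { toFun := fun x ↦ (localizationDualNumberHom W x).snd
      map_zero' := by simp
      map_add' := by simp } fun a b ↦ by simp [mul_comm]

/-- The localization map as a homomorphism of differential rings. -/
noncomputable def localizationHom : R →ᵈ Localization W where
  toRingHom := algebraMap R _
  map_deriv' r := by
    change algebraMap R _ r′ = (localizationDualNumberHom W (algebraMap R _ r)).snd
    rw [localizationDualNumberHom_algebraMap, snd_dualNumberHom]

end Localization

section Simple

variable {R : Type*} [CommRing R] [Differential R]

theorem isUnit_localizationAway (a : R) :
    IsUnit (localizationHom (Submonoid.powers a) a) :=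
  IsLocalization.map_units (Localization.Away a) (⟨a, 1, pow_one a⟩ : Submonoid.powers a)

theorem nontrivial_localizationAway {A : Type*} [CommRing A] {a : A} (ha : ¬IsNilpotent a) :
    Nontrivial (Localization.Away a) := by
  rw [← not_subsingleton_iff_nontrivial,
    IsLocalization.subsingleton_iff (M := Submonoid.powers a)]
  rintro ⟨n, hn⟩
  exact ha ⟨n, hn⟩

theorem IsDiffSimple.mem_nonZeroDivisors (hR : IsDiffSimple R) {a : R} (ha : ¬IsNilpotent a) :
    a ∈ nonZeroDivisors R := by
  have := nontrivial_localizationAway ha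
  let f : R →ᵈ Localization.Away a := localizationHom (Submonoid.powers a)
  exact mem_nonZeroDivisors_of_injective (hR.injective f)
    (isUnit_localizationAway a).mem_nonZeroDivisors

theorem IsDiffSimple.isDiffIdeal_nilradical [Algebra ℚ R] (hR : IsDiffSimple R) :
    IsDiffIdeal (nilradical R) := by
  intro a ha
  have := hR.nontrivial
  by_contra ha'
  have hreg := hR.mem_nonZeroDivisors ha'
  have hn : 0 < nilpotencyClass a := pos_nilpotencyClass_iff.2 ha
  have h0 : nilpotencyClass a • (a ^ (nilpotencyClass a - 1) * a′) = 0 := by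
    have := congrArg (·′) (pow_nilpotencyClass ha)
    simpa [Derivation.leibniz_pow] using this
  refine pow_pred_nilpotencyClass ha <| hreg.2 _ ?_
  rw [← Nat.cast_smul_eq_nsmul ℚ] at h0
  exact (smul_eq_zero.1 h0).resolve_left (Nat.cast_ne_zero.2 hn.ne')

theorem IsDiffSimple.isDomain [Algebra ℚ R] (hR : IsDiffSimple R) : IsDomain R := by
  have := hR.nontrivial
  have hnil : nilradical R = ⊥ :=
    (hR.eq_bot_or_eq_top _ hR.isDiffIdeal_nilradical).resolve_right fun h ↦
      not_isNilpotent_one <| mem_nilradical.1 (h ▸ Submodule.mem_top : (1 : R) ∈ nilradical R)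
  have hreg (a : R) (ha : a ≠ 0) : a ∈ nonZeroDivisors R :=
    hR.mem_nonZeroDivisors fun h ↦ ha <| by simpa [hnil] using mem_nilradical.2 h
  have : NoZeroDivisors R := ⟨fun {a b} hab ↦ or_iff_not_imp_left.2 fun ha ↦
    (hreg a ha).1 b hab⟩
  exact IsDomain.mk

end Simple

section Tensor

variable {R A B : Type*} [CommRing R] [CommRing A] [CommRing B] [Algebra R A] [Algebra R B]
  [Differential R] [Differential A] [Differential B]
  [DifferentialAlgebra R A] [DifferentialAlgebra R B]

theorem deriv_smul (r : R) (a : A) : (r • a)′ = r′ • a + r • a′ := by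
  simp only [Algebra.smul_def, Derivation.leibniz, deriv_algebraMap, Algebra.algebraMap_self,
    RingHom.id_apply]
  ring

variable (R A B) in
/-- The additive map `a ⊗ b ↦ a′ ⊗ b + a ⊗ b′`. -/
noncomputable def tensorDeriv : A ⊗[R] B →+ A ⊗[R] B :=
  TensorProduct.liftAddHom
    (AddMonoidHom.mk' (fun a ↦ AddMonoidHom.mk' (fun b ↦ a′ ⊗ₜ[R] b + a ⊗ₜ[R] b′) fun b c ↦ by
        simp only [map_add, TensorProduct.tmul_add]; abel) fun a c ↦ by
        ext b; simp only [map_add, TensorProduct.add_tmul, AddMonoidHom.mk'_apply,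
          AddMonoidHom.add_apply]; abel)
    fun r a b ↦ by
      simp only [AddMonoidHom.mk'_apply, deriv_smul, TensorProduct.add_tmul,
        TensorProduct.tmul_add, TensorProduct.smul_tmul]
      abel

@[simp]
theorem tensorDeriv_tmul (a : A) (b : B) :
    tensorDeriv R A B (a ⊗ₜ b) = a′ ⊗ₜ b + a ⊗ₜ b′ := rfl

noncomputable instance : Differential (A ⊗[R] B) :=
  differentialOfLeibniz (tensorDeriv R A B) fun x y ↦ by
    induction x with
    | zero => simp
    | add x₁ x₂ h₁ h₂ => rw [add_mul, map_add, map_add, h₁, h₂]; ring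
    | tmul a b =>
      induction y with
      | zero => simp
      | add y₁ y₂ h₁ h₂ => rw [mul_add, map_add, map_add, h₁, h₂]; ring
      | tmul c d =>
        simp only [Algebra.TensorProduct.tmul_mul_tmul, tensorDeriv_tmul, Derivation.leibniz,
          smul_eq_mul, TensorProduct.add_tmul, TensorProduct.tmul_add, mul_add]
        rw [mul_comm c a, mul_comm c a′, mul_comm d b]
        abel

variable (R A B) in
/-- The left coprojection as a homomorphism of differential rings. -/
noncomputable def includeLeft : A →ᵈ A ⊗[R] B where
  toRingHom := Algebra.TensorProduct.includeLeftRingHom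
  map_deriv' a := by
    change a′ ⊗ₜ 1 = tensorDeriv R A B (a ⊗ₜ 1)
    simp [Derivation.map_one_eq_zero]

variable (R A B) in
/-- The right coprojection as a homomorphism of differential rings. -/
noncomputable def includeRight : B →ᵈ A ⊗[R] B where
  toRingHom := (Algebra.TensorProduct.includeRight : B →ₐ[R] A ⊗[R] B)
  map_deriv' b := by
    change (1 : A) ⊗ₜ b′ = tensorDeriv R A B (1 ⊗ₜ b)
    simp [Derivation.map_one_eq_zero]

end Tensor

/-! ### Differential fields -/

instance : CoeSort DFld.{u} (Type u) := ⟨carrier⟩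

instance (E : DFld.{u}) : Differential E :=
  differentialOfLeibniz (AddMonoidHom.mk' E.deriv E.deriv_add) fun a b ↦ by
    change E.deriv (a * b) = a * E.deriv b + b * E.deriv a
    rw [E.deriv_mul]; ring

/-- Bundles a differential field of characteristic zero. -/
abbrev of (F : Type u) [Field F] [CharZero F] [Differential F] : DFld.{u} where
  carrier := F
  deriv := (·′)
  deriv_add := map_add _
  deriv_mul a b := by rw [Derivation.leibniz, smul_eq_mul, smul_eq_mul]; ring

section Residue

variable {R : Type u} [CommRing R] [Differential R]

theorem exists_maximal_isDiffIdeal [Nontrivial R] :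
    ∃ I : Ideal R, Maximal (fun I ↦ IsDiffIdeal I ∧ I ≠ ⊤) I := by
  have hbot : IsDiffIdeal (⊥ : Ideal R) := fun x hx ↦ by
    rw [Submodule.mem_bot] at hx ⊢
    rw [hx, map_zero]
  have hchain (c : Set (Ideal R)) (hc : c ⊆ {I | IsDiffIdeal I ∧ I ≠ ⊤})
      (hc' : IsChain (· ≤ ·) c) (J : Ideal R) (hJ : J ∈ c) :
      ∃ I ∈ {I | IsDiffIdeal I ∧ I ≠ ⊤}, ∀ J ∈ c, J ≤ I := by
    have hmem {x : R} : x ∈ sSup c ↔ ∃ I ∈ c, x ∈ I :=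
      Submodule.mem_sSup_of_directed ⟨J, hJ⟩ hc'.directedOn
    refine ⟨sSup c, ⟨fun x hx ↦ ?_, fun h ↦ ?_⟩, fun _ ↦ le_sSup⟩
    · obtain ⟨I, hI, hx⟩ := hmem.1 hx
      exact hmem.2 ⟨I, hI, (hc hI).1 x hx⟩
    · obtain ⟨I, hI, h1⟩ := hmem.1 ((Ideal.eq_top_iff_one _).1 h)
      exact (hc hI).2 ((Ideal.eq_top_iff_one _).2 h1)
  obtain ⟨I, -, hI⟩ := zorn_le_nonempty₀ _ hchain ⊥ ⟨hbot, bot_ne_top⟩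
  exact ⟨I, hI⟩

theorem exists_isDiffSimple_quotient [Nontrivial R] :
    ∃ (S : Type u) (_ : CommRing S) (_ : Differential S) (π : R →ᵈ S),
      Function.Surjective π ∧ IsDiffSimple S := by
  obtain ⟨I, ⟨hI, hI'⟩, hmax⟩ := exists_maximal_isDiffIdeal (R := R)
  let _ := quotientDifferential hI
  let π : R →ᵈ R ⧸ I := ⟨Ideal.Quotient.mk I, fun _ ↦ rfl⟩
  have hπ : Function.Surjective π := Ideal.Quotient.mk_surjective
  refine ⟨R ⧸ I, _, _, π, hπ, Ideal.Quotient.nontrivial_iff.2 hI', fun J hJ ↦ ?_⟩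
  have hIJ : I ≤ J.comap π := fun x hx ↦ by
    rw [Ideal.mem_comap, show π x = 0 from Ideal.Quotient.eq_zero_iff_mem.2 hx]
    exact J.zero_mem
  refine or_iff_not_imp_right.2 fun hJ' ↦ ?_
  have hle := hmax ⟨hJ.comap π, fun h ↦ hJ' (Ideal.comap_eq_top_iff.1 h)⟩ hIJ
  refine (Submodule.eq_bot_iff J).2 fun y hy ↦ ?_
  obtain ⟨x, rfl⟩ := hπ y
  exact Ideal.Quotient.eq_zero_iff_mem.2 (hle hy)

theorem exists_hom [Algebra ℚ R] [Nontrivial R] : ∃ M : DFld.{u}, Nonempty (R →ᵈ M) := by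
  obtain ⟨S, _, _, π, -, hS⟩ := exists_isDiffSimple_quotient (R := R)
  let _ := (π.toRingHom.comp (algebraMap ℚ R)).toAlgebra
  have := hS.isDomain
  have : CharZero S := algebraRat.charZero S
  exact ⟨of (FractionRing S), ⟨(localizationHom (nonZeroDivisors S)).comp π⟩⟩

theorem exists_hom_ne_zero [Algebra ℚ R] {z : R} (hz : ¬IsNilpotent z) :
    ∃ (M : DFld.{u}) (φ : R →ᵈ M), φ z ≠ 0 := by
  have : Nontrivial (Localization.Away z) := nontrivial_localizationAway hz
  let f : R →ᵈ Localization.Away z := localizationHom (Submonoid.powers z)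
  let _ := (f.toRingHom.comp (algebraMap ℚ R)).toAlgebra
  have hu : IsUnit (f z) := isUnit_localizationAway z
  obtain ⟨M, ⟨φ⟩⟩ := exists_hom (R := Localization.Away z)
  exact ⟨M, φ.comp f, (hu.map φ).ne_zero⟩

end Residue

section

variable {A E F M N : DFld.{u}}

theorem exists_amalgam (i : A →ᵈ E) (j : A →ᵈ F) :
    ∃ (M : DFld.{u}) (ι : E →ᵈ M) (τ : F →ᵈ M), ι.comp i = τ.comp j := by
  let _ := i.toRingHom.toAlgebra
  let _ := j.toRingHom.toAlgebra
  have : DifferentialAlgebra A E := ⟨fun a ↦ (i.map_deriv a).symm⟩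
  have : DifferentialAlgebra A F := ⟨fun a ↦ (j.map_deriv a).symm⟩
  obtain ⟨M, ⟨φ⟩⟩ := exists_hom (R := E ⊗[A] F)
  refine ⟨M, φ.comp (includeLeft A E F), φ.comp (includeRight A E F), DHom.ext fun a ↦ ?_⟩
  exact congrArg φ (Algebra.TensorProduct.tmul_one_eq_one_tmul a)

/-- The field of constants. -/
def constants (E : DFld.{u}) : Subfield E where
  carrier := {x | x′ = 0}
  zero_mem' := map_zero _
  one_mem' := Derivation.map_one_eq_zero _
  add_mem' {a b} (ha : a′ = 0) (hb : b′ = 0) := by simp [ha, hb]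
  neg_mem' {a} (ha : a′ = 0) := by simp [ha]
  mul_mem' {a b} (ha : a′ = 0) (hb : b′ = 0) := by simp [ha, hb]
  inv_mem' a (ha : a′ = 0) := by simp [Derivation.leibniz_inv, ha]

theorem mem_constants {x : E} : x ∈ constants E ↔ x′ = 0 := Iff.rfl

section NoNewConstants

variable {S : Type u} [CommRing S] [Differential S] [Algebra E S] [DifferentialAlgebra E S]

theorem exists_constant_of_isAlgebraic [IsDomain S] (hE : IsAlgClosed (constants E)) {c : S}
    (hc : c′ = 0) (hc' : IsAlgebraic E c) : ∃ a ∈ constants E, algebraMap E S a = c := by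
  set p := minpoly E c
  have hmonic : p.Monic := minpoly.monic hc'.isIntegral
  have hroot : Polynomial.aeval c (Differential.mapCoeffs p) = 0 := by
    have h := Differential.deriv_aeval_eq c p
    rwa [minpoly.aeval, map_zero, hc, mul_zero, add_zero, eq_comm] at h
  have hdeg : (Differential.mapCoeffs p).degree < p.degree := by
    rw [Polynomial.degree_eq_natDegree hmonic.ne_zero, Polynomial.degree_lt_iff_coeff_zero]
    intro n hn
    rw [Differential.coeff_mapCoeffs]
    obtain rfl | hlt := hn.eq_or_lt
    · rw [hmonic.coeff_natDegree, Derivation.map_one_eq_zero]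
    · rw [Polynomial.coeff_eq_zero_of_natDegree_lt hlt, map_zero]
  have hzero : Differential.mapCoeffs p = 0 :=
    Polynomial.eq_zero_of_dvd_of_degree_lt (minpoly.dvd E c hroot) hdeg
  have hlift : p ∈ Polynomial.lifts (constants E).subtype := by
    rw [Polynomial.lifts_iff_coeff_lifts]
    exact fun n ↦ ⟨⟨p.coeff n, by simpa [mem_constants] using congrArg (·.coeff n) hzero⟩, rfl⟩
  obtain ⟨q, hq⟩ := hlift
  rw [Polynomial.coe_mapRingHom] at hq
  obtain ⟨a, ha⟩ := IsAlgClosed.exists_root q <| by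
    rw [← Polynomial.degree_map q (constants E).subtype, hq]
    exact (minpoly.degree_pos hc'.isIntegral).ne'
  refine ⟨a, a.2, minpoly.root hc'.isIntegral ?_⟩
  have h := ha.map (f := (constants E).subtype)
  rwa [hq] at h

end NoNewConstants

/-- The map `Spec R → 𝔸¹` given by `c` is open and dominant, so it omits finitely many points. -/
theorem exists_forall_not_isUnit_of_transcendental {K R : Type*} [Field K] [CommRing R]
    [IsDomain R] [Algebra K R] [Algebra.FiniteType K R] {c : R} (hc : Transcendental K c) :
    ∃ p : Polynomial K, p ≠ 0 ∧ ∀ a, p.eval a ≠ 0 → ¬IsUnit (c - algebraMap K R a) := by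
  let _ : Algebra (Polynomial K) R := (Polynomial.aeval (R := K) c).toAlgebra
  have hmap (p : Polynomial K) : algebraMap (Polynomial K) R p = Polynomial.aeval c p := rfl
  have : IsScalarTower K (Polynomial K) R := IsScalarTower.of_algebraMap_eq fun x ↦ by simp [hmap]
  have : Algebra.FiniteType (Polynomial K) R :=
    Algebra.FiniteType.of_restrictScalars_finiteType K _ _
  have : Algebra.FinitePresentation (Polynomial K) R :=
    Algebra.FinitePresentation.of_finiteType.1 inferInstance
  have hinj : Function.Injective (algebraMap (Polynomial K) R) :=
    transcendental_iff_injective.1 hc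
  have : FaithfulSMul (Polynomial K) R := (faithfulSMul_iff_algebraMap_injective _ _).2 hinj
  have hopen := (PrimeSpectrum.isOpenMap_comap_of_hasGoingDown_of_finitePresentation
    (R := Polynomial K) (S := R)).isOpen_range
  have hbot : ⊥ ∈ Set.range (PrimeSpectrum.comap (algebraMap (Polynomial K) R)) :=
    ⟨⊥, PrimeSpectrum.ext <| (RingHom.injective_iff_ker_eq_bot _).1 hinj⟩
  obtain ⟨_, ⟨p, rfl⟩, hp, hsub⟩ :=
    PrimeSpectrum.isTopologicalBasis_basic_opens.exists_subset_of_mem_open hbot hopen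
  refine ⟨p, fun h ↦ by simp [h] at hp, fun a ha hu ↦ ?_⟩
  have hprime := Polynomial.prime_X_sub_C a
  obtain ⟨q, hq⟩ := hsub (show ⟨Ideal.span {Polynomial.X - Polynomial.C a},
      (Ideal.span_singleton_prime hprime.ne_zero).2 hprime⟩ ∈ PrimeSpectrum.basicOpen p by
    rwa [PrimeSpectrum.mem_basicOpen, Ideal.mem_span_singleton, Polynomial.dvd_iff_isRoot])
  have hX : algebraMap (Polynomial K) R (Polynomial.X - Polynomial.C a) ∈ q.asIdeal := by
    rw [← Ideal.mem_comap, ← PrimeSpectrum.comap_asIdeal, hq]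
    exact Ideal.mem_span_singleton_self _
  rw [hmap, map_sub, Polynomial.aeval_X, Polynomial.aeval_C] at hX
  exact q.2.ne_top (Ideal.eq_top_of_isUnit_mem _ hX hu)

section NoNewConstants

variable {S : Type u} [CommRing S] [Differential S]

theorem IsDiffSimple.isUnit (hS : IsDiffSimple S) {c : S} (hc : c′ = 0) (hc' : c ≠ 0) :
    IsUnit c := by
  have hdiff : IsDiffIdeal (Ideal.span {c}) := fun x hx ↦ by
    obtain ⟨y, rfl⟩ := Ideal.mem_span_singleton'.1 hx
    exact Ideal.mem_span_singleton'.2 ⟨y′, by simp [hc, mul_comm]⟩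
  exact Ideal.span_singleton_eq_top.1 <| (hS.eq_bot_or_eq_top _ hdiff).resolve_left fun h ↦
    hc' (Ideal.span_singleton_eq_bot.1 h)

theorem IsDiffSimple.exists_constant [Algebra E S] [DifferentialAlgebra E S]
    [Algebra.FiniteType E S] (hS : IsDiffSimple S) (hE : IsAlgClosed (constants E)) {c : S}
    (hc : c′ = 0) : ∃ a ∈ constants E, algebraMap E S a = c := by
  let _ := ((algebraMap E S).comp (algebraMap ℚ E)).toAlgebra
  have := hS.isDomain
  by_contra! hne
  obtain ⟨p, hp, hunit⟩ := exists_forall_not_isUnit_of_transcendental fun h ↦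
    let ⟨a, ha, h⟩ := exists_constant_of_isAlgebraic hE hc h
    hne a ha h
  have hinf : (constants E : Set E).Infinite :=
    Set.infinite_coe_iff.1 (inferInstance : Infinite (constants E))
  obtain ⟨a, ha, hpa⟩ := hinf.exists_notMem_finite (p.rootSet_finite E)
  refine hunit a (fun h ↦ hpa ?_) <| hS.isUnit ?_ (sub_ne_zero.2 (hne a ha).symm)
  · exact Polynomial.mem_rootSet.2 ⟨hp, by simpa using h⟩
  · rw [map_sub, hc, deriv_algebraMap, mem_constants.1 ha, map_zero, sub_zero]

theorem IsDiffSimple.exists_eq_of_deriv_eq_zero [IsDomain S] (hS : IsDiffSimple S)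
    {c : FractionRing S} (hc : c′ = 0) :
    ∃ b : S, b′ = 0 ∧ localizationHom (nonZeroDivisors S) b = c := by
  let i : S →ᵈ FractionRing S := localizationHom (nonZeroDivisors S)
  have hi : Function.Injective i := IsFractionRing.injective S (FractionRing S)
  let I : Ideal S :=
    { carrier := {s | ∃ b, i b = i s * c}
      add_mem' := by
        rintro s t ⟨b, hb⟩ ⟨d, hd⟩
        exact ⟨b + d, by rw [map_add, map_add, hb, hd, add_mul]⟩
      zero_mem' := ⟨0, by simp⟩
      smul_mem' := by
        rintro s t ⟨b, hb⟩
        exact ⟨s * b, by rw [smul_eq_mul, map_mul, map_mul, hb, mul_assoc]⟩ }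
  have hI : IsDiffIdeal I := by
    rintro s ⟨b, hb⟩
    exact ⟨b′, by rw [i.map_deriv, hb, leibniz, hc, i.map_deriv, mul_zero, zero_add, mul_comm]⟩
  obtain ⟨b, s, hs, rfl⟩ := IsFractionRing.div_surjective (A := S) c
  have hs0 : i s ≠ 0 := IsFractionRing.to_map_ne_zero_of_mem_nonZeroDivisors hs
  have hsI : s ∈ I := ⟨b, (mul_div_cancel₀ _ hs0).symm⟩
  have htop : I = ⊤ := (hS.eq_bot_or_eq_top I hI).resolve_left fun h ↦
    hs0 (by rw [(Submodule.eq_bot_iff I).1 h s hsI, map_zero])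
  obtain ⟨d, hd⟩ : (1 : S) ∈ I := htop ▸ Submodule.mem_top
  rw [map_one, one_mul] at hd
  refine ⟨d, hi ?_, hd⟩
  rw [i.map_deriv, hd, hc, map_zero]

end NoNewConstants

/-! ### Differential subfields -/

/-- Differential subfields. -/
def IsDiff (K : Subfield E) : Prop := ∀ x ∈ K, x′ ∈ K

/-- A differential subfield as a differential field in its own right. -/
def IsDiff.toDFld {K : Subfield E} (hK : IsDiff K) : DFld.{u} where
  carrier := K
  deriv x := ⟨(x : E)′, hK x x.2⟩
  deriv_add a b := Subtype.ext (E.deriv_add a b)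
  deriv_mul a b := Subtype.ext (E.deriv_mul a b)

/-- The inclusion of a differential subfield. -/
def IsDiff.subtype {K : Subfield E} (hK : IsDiff K) : hK.toDFld →ᵈ E :=
  ⟨K.subtype, fun _ ↦ rfl⟩

namespace DHom

/-- The image of a homomorphism of differential fields. -/
def range (f : E →ᵈ F) : Subfield F := f.toRingHom.fieldRange

theorem mem_range_self (f : E →ᵈ F) (x : E) : f x ∈ f.range := ⟨x, rfl⟩

theorem injective (f : E →ᵈ F) : Function.Injective f := f.toRingHom.injective

/-- Restriction of the codomain to a differential subfield. -/
def codRestrict (f : E →ᵈ F) {K : Subfield F} (hK : IsDiff K) (h : f.range ≤ K) :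
    E →ᵈ hK.toDFld :=
  ⟨f.toRingHom.codRestrict K fun x ↦ h ⟨x, rfl⟩, fun x ↦ Subtype.ext (f.map_deriv x)⟩

end DHom

@[simp]
theorem IsDiff.range_subtype {K : Subfield E} (hK : IsDiff K) : hK.subtype.range = K :=
  K.fieldRange_subtype

theorem isDiff_closure {s : Set E} (h : ∀ x ∈ s, x′ ∈ Subfield.closure s) :
    IsDiff (Subfield.closure s) := fun x hx ↦ by
  induction hx using Subfield.closure_induction with
  | mem x hx => exact h x hx
  | one => rw [Derivation.map_one_eq_zero]; exact zero_mem _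
  | add x y _ _ hx hy => rw [map_add]; exact add_mem hx hy
  | neg x _ hx => rw [map_neg]; exact neg_mem hx
  | inv x hx hx' =>
    rw [Derivation.leibniz_inv]
    exact mul_mem (neg_mem (pow_mem (inv_mem hx) 2)) hx'
  | mul x y hx hy hx' hy' => rw [leibniz]; exact add_mem (mul_mem hx hy') (mul_mem hy hx')

theorem isDiff_iSup {ι : Sort*} {K : ι → Subfield E} (h : ∀ i, IsDiff (K i)) :
    IsDiff (⨆ i, K i) := by
  have hcl : ⨆ i, K i = Subfield.closure (⋃ i, (K i : Set E)) := by
    simp only [Subfield.closure_iUnion, Subfield.closure_eq]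
  rw [hcl]
  refine isDiff_closure fun x hx ↦ Subfield.subset_closure ?_
  obtain ⟨i, hx⟩ := Set.mem_iUnion.1 hx
  exact Set.mem_iUnion.2 ⟨i, h i x hx⟩

theorem IsDiff.sup {K L : Subfield E} (hK : IsDiff K) (hL : IsDiff L) : IsDiff (K ⊔ L) := by
  rw [sup_eq_iSup]
  exact isDiff_iSup fun b ↦ by cases b <;> assumption

theorem IsDiff.inf {K L : Subfield E} (hK : IsDiff K) (hL : IsDiff L) : IsDiff (K ⊓ L) :=
  fun x hx ↦ ⟨hK x hx.1, hL x hx.2⟩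

theorem DHom.isDiff_range (f : E →ᵈ F) : IsDiff f.range := by
  rintro _ ⟨x, rfl⟩
  exact ⟨x′, f.map_deriv x⟩

theorem IsDiff.map {K : Subfield E} (hK : IsDiff K) (f : E →ᵈ F) :
    IsDiff (K.map f.toRingHom) := by
  rintro _ ⟨x, hx, rfl⟩
  exact ⟨x′, hK x hx, f.map_deriv x⟩

theorem DHom.map_mem_constants_iff (f : E →ᵈ F) {x : E} :
    f x ∈ constants F ↔ x ∈ constants E := by
  rw [mem_constants, mem_constants, ← f.map_deriv, map_eq_zero_iff f f.injective]

theorem DHom.map_constants_le (f : E →ᵈ F) : (constants E).map f.toRingHom ≤ constants F := by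
  rintro _ ⟨x, hx, rfl⟩
  exact f.map_mem_constants_iff.2 hx

theorem DHom.map_range (f : E →ᵈ F) (g : F →ᵈ M) : f.range.map g.toRingHom = (g.comp f).range :=
  RingHom.map_fieldRange _ _

/-! ### Specializations -/

/-- A specialization of `M` in `M'`: a homomorphism of differential rings to `M'` defined on a
differential subring of `M`. -/
structure Specialization (M M' : DFld.{u}) where
  /-- The differential subring on which the specialization is defined. -/
  domain : Subring M
  deriv_mem : ∀ x ∈ domain, x′ ∈ domain
  /-- The underlying ring homomorphism. -/
  toRingHom : domain →+* M'
  map_deriv : ∀ x : domain, toRingHom ⟨(x : M)′, deriv_mem x x.2⟩ = (toRingHom x)′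

namespace Specialization

variable {M' : DFld.{u}}

instance : CoeFun (Specialization M M') fun φ ↦ φ.domain → M' := ⟨fun φ ↦ φ.toRingHom⟩

/-- Composition of an everywhere defined homomorphism with a specialization. -/
def compDHom (φ : Specialization M M') (f : E →ᵈ M) (h : ∀ x, f x ∈ φ.domain) : E →ᵈ M' where
  toRingHom := φ.toRingHom.comp (f.toRingHom.codRestrict φ.domain h)
  map_deriv' x :=
    (congrArg φ.toRingHom (Subtype.ext (f.map_deriv x))).trans (φ.map_deriv ⟨f x, h x⟩)

/-- The pullback of a specialization along an everywhere defined homomorphism. -/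
def comap (φ : Specialization M M') (f : E →ᵈ M) : Specialization E M' where
  domain := φ.domain.comap f.toRingHom
  deriv_mem x hx := by
    change f x′ ∈ φ.domain
    rw [f.map_deriv]
    exact φ.deriv_mem _ hx
  toRingHom := φ.toRingHom.comp
    ((f.toRingHom.comp (Subring.subtype _)).codRestrict φ.domain fun x ↦ x.2)
  map_deriv x := by
    refine Eq.trans ?_ (φ.map_deriv ⟨f x, x.2⟩)
    exact congrArg φ.toRingHom (Subtype.ext (f.map_deriv x))

theorem apply_mem_constants (φ : Specialization M M') {x : M} (hx : x ∈ φ.domain)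
    (hxc : x ∈ constants M) : φ ⟨x, hx⟩ ∈ constants M' := by
  rw [mem_constants, ← φ.map_deriv, ← map_zero φ.toRingHom]
  exact congrArg φ.toRingHom (Subtype.ext (mem_constants.1 hxc))

theorem apply_mul_apply_inv (φ : Specialization M M') {x : M} (hx : x ∈ φ.domain)
    (hx' : x⁻¹ ∈ φ.domain) (h0 : x ≠ 0) : φ ⟨x, hx⟩ * φ ⟨x⁻¹, hx'⟩ = 1 := by
  rw [← map_mul, ← map_one φ.toRingHom]
  exact congrArg φ.toRingHom (Subtype.ext (mul_inv_cancel₀ h0))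

theorem apply_ne_zero (φ : Specialization M M') {x : M} (hx : x ∈ φ.domain)
    (hx' : x⁻¹ ∈ φ.domain) (h0 : x ≠ 0) : φ ⟨x, hx⟩ ≠ 0 :=
  left_ne_zero_of_mul_eq_one (φ.apply_mul_apply_inv hx hx' h0)

end Specialization

theorem exists_mul_mem_adjoin {E M : Type*} [Field E] [Field M] [Algebra E M] {s : Set M}
    {x : M} (hx : x ∈ IntermediateField.adjoin E s) :
    ∃ q ∈ Algebra.adjoin E s, q ≠ 0 ∧ x * q ∈ Algebra.adjoin E s := by
  obtain ⟨p, hp, q, hq, rfl⟩ := IntermediateField.mem_adjoin_iff_div.1 hx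
  obtain rfl | hq0 := eq_or_ne q 0
  · exact ⟨1, one_mem _, one_ne_zero, by simp⟩
  · exact ⟨q, hq, hq0, by rwa [div_mul_cancel₀ _ hq0]⟩

section Existence

variable [Algebra E M]

theorem deriv_mem_of_mem_adjoin [DifferentialAlgebra E M] {s : Set M} {T : Subalgebra E M}
    (hs : s ⊆ T) (hs' : ∀ x ∈ s, x′ ∈ T) : ∀ x ∈ Algebra.adjoin E s, x′ ∈ T := fun x hx ↦ by
  have hT := Algebra.adjoin_le hs
  induction hx using Algebra.adjoin_induction with
  | mem x hx => exact hs' x hx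
  | algebraMap a => rw [deriv_algebraMap]; exact T.algebraMap_mem _
  | add x y _ _ hx hy => rw [map_add]; exact add_mem hx hy
  | mul x y hx hy hx' hy' =>
    rw [leibniz]; exact add_mem (mul_mem (hT hx) hy') (mul_mem (hT hy) hx')

/-- The subalgebra is obtained by inverting denominators of the derivatives of the generators. -/
theorem exists_fg_differential_subalgebra [DifferentialAlgebra E M] {s t : Finset M}
    (hs : ∀ x ∈ IntermediateField.adjoin E (s : Set M), x′ ∈ IntermediateField.adjoin E (s : Set M))
    (ht : ↑t ⊆ (IntermediateField.adjoin E (s : Set M) : Set M)) :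
    ∃ T : Subalgebra E M, T.FG ∧ ↑t ⊆ (T : Set M) ∧ ∀ x ∈ T, x′ ∈ T := by
  classical
  choose! q hq hq0 hxq using fun x ↦ exists_mul_mem_adjoin (E := E) (s := (s : Set M)) (x := x)
  let r : Finset M := s ∪ t ∪ (s ∪ t).image fun x ↦ (q x′)⁻¹
  let T := Algebra.adjoin E (r : Set M)
  have hrT : ↑r ⊆ (T : Set M) := Algebra.subset_adjoin
  have hsT : Algebra.adjoin E (s : Set M) ≤ T :=
    Algebra.adjoin_mono fun x hx ↦ by simp [r, Finset.mem_coe.1 hx]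
  have hd (x : M) (hx : x ∈ s ∪ t) : x′ ∈ IntermediateField.adjoin E (s : Set M) :=
    hs x <| (Finset.mem_union.1 hx).elim (fun h ↦ IntermediateField.subset_adjoin E _ h) (ht ·)
  have hinv (x : M) (hx : x ∈ s ∪ t) : (q x′)⁻¹ ∈ T :=
    hrT (Finset.mem_union_right _ (Finset.mem_image_of_mem _ hx))
  have hst (x : M) (hx : x ∈ s ∪ t) : x′ ∈ T := by
    rw [← mul_inv_cancel_right₀ (hq0 _ (hd x hx)) x′]
    exact mul_mem (hsT (hxq _ (hd x hx))) (hinv x hx)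
  have hq' : ∀ x ∈ Algebra.adjoin E (s : Set M), x′ ∈ T :=
    deriv_mem_of_mem_adjoin (fun x hx ↦ hsT (Algebra.subset_adjoin hx))
      fun x hx ↦ hst x (Finset.mem_union_left _ hx)
  refine ⟨T, ⟨r, rfl⟩, fun x hx ↦ hrT (by simp [r, Finset.mem_coe.1 hx]),
    deriv_mem_of_mem_adjoin hrT fun x hx ↦ ?_⟩
  obtain hx | hx := Finset.mem_union.1 hx
  · exact hst x hx
  · obtain ⟨y, hy, rfl⟩ := Finset.mem_image.1 hx
    rw [Derivation.leibniz_inv]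
    exact mul_mem (neg_mem (pow_mem (hinv y hy) 2)) (hq' _ (hq _ (hd y hy)))

end Existence

/-- Over a base with algebraically closed constants, specializations need not create constants. -/
theorem exists_specialization (hE : IsAlgClosed (constants E)) (ι : E →ᵈ M) {s t : Finset M}
    (hs : IsDiff (Subfield.closure (ι.range ∪ s : Set M)))
    (ht : ↑t ⊆ (Subfield.closure (ι.range ∪ s : Set M) : Set M)) :
    ∃ (M' : DFld.{u}) (φ : Specialization M M') (h : ∀ x, ι x ∈ φ.domain),
      ↑t ⊆ (φ.domain : Set M) ∧ constants M' ≤ (constants E).map (φ.compDHom ι h).toRingHom := by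
  let _ := ι.toRingHom.toAlgebra
  have : DifferentialAlgebra E M := ⟨fun a ↦ (ι.map_deriv a).symm⟩
  obtain ⟨T, hfg, ht, hT⟩ := exists_fg_differential_subalgebra (E := E) hs ht
  let _ : Differential T := differentialOfLeibniz
    (AddMonoidHom.mk' (fun x ↦ ⟨(x : M)′, hT x x.2⟩) fun a b ↦ Subtype.ext (map_add _ _ _))
    fun a b ↦ Subtype.ext (leibniz _ _)
  obtain ⟨S, _, _, π, hπ, hS⟩ := exists_isDiffSimple_quotient (R := T)
  let _ := (π.toRingHom.comp (algebraMap E T)).toAlgebra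
  have : DifferentialAlgebra E S := ⟨fun a ↦ by
    refine (π.map_deriv (algebraMap E T a)).symm.trans (congrArg π (Subtype.ext ?_))
    exact (ι.map_deriv a).symm⟩
  have : Algebra.FiniteType E T := Subalgebra.fg_iff_finiteType T |>.1 hfg
  have : Algebra.FiniteType E S :=
    Algebra.FiniteType.of_surjective (⟨π.toRingHom, fun _ ↦ rfl⟩ : T →ₐ[E] S) hπ
  let _ := ((algebraMap E S).comp (algebraMap ℚ E)).toAlgebra
  have := hS.isDomain
  have : CharZero S := algebraRat.charZero S
  let i : S →ᵈ FractionRing S := localizationHom _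
  refine ⟨of (FractionRing S), ⟨T.toSubring, hT, (i.comp π).toRingHom, (i.comp π).map_deriv⟩,
    T.algebraMap_mem, ht, fun c hc ↦ ?_⟩
  obtain ⟨b, hb, rfl⟩ := hS.exists_eq_of_deriv_eq_zero (mem_constants.1 hc)
  obtain ⟨a, ha, rfl⟩ := hS.exists_constant hE hb
  exact ⟨a, ha, rfl⟩

theorem map_deriv_of_mem_closure (f : E →+* F) {s : Set E} (h : ∀ x ∈ s, f x′ = (f x)′) :
    ∀ x ∈ Subfield.closure s, f x′ = (f x)′ := fun x hx ↦ by
  induction hx using Subfield.closure_induction with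
  | mem x hx => exact h x hx
  | one => simp
  | add x y _ _ hx hy => rw [map_add, map_add, map_add, map_add, hx, hy]
  | neg x _ hx => rw [map_neg, map_neg, map_neg, map_neg, hx]
  | inv x _ hx => simp [Derivation.leibniz_inv, hx]
  | mul x y _ _ hx hy => simp [hx, hy]

theorem DHom.exists_extension {R : Type*} [CommRing R] [Differential R] {u : R →ᵈ N} {v : R →ᵈ F}
    (hu : Function.Injective u) (hv : Function.Injective v)
    (h : Subfield.closure (Set.range u) = ⊤) : ∃ f : N →ᵈ F, ∀ x, f (u x) = v x := by
  let _ := u.toRingHom.toAlgebra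
  have : FaithfulSMul R N := (faithfulSMul_iff_algebraMap_injective R N).2 hu
  have : IsFractionRing R N := IsFractionRing.of_field _ _ fun x ↦ by
    obtain ⟨_, hy, _, hz, hx⟩ := Subfield.mem_closure_iff.1 (h ▸ Subfield.mem_top x)
    have hcl : Subring.closure (Set.range u) = u.toRingHom.range := u.toRingHom.range.closure_eq
    rw [hcl] at hy hz
    obtain ⟨y, rfl⟩ := hy
    obtain ⟨z, rfl⟩ := hz
    exact ⟨y, z, hx.symm⟩
  let f : N →+* F := IsFractionRing.lift (K := N) (g := v.toRingHom) hv
  have hf (x : R) : f (u x) = v x := IsFractionRing.lift_algebraMap hv x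
  have hd : ∀ x ∈ Subfield.closure (Set.range u), f x′ = (f x)′ :=
    map_deriv_of_mem_closure f fun _ ⟨x, hx⟩ ↦ by
      rw [← hx, ← u.map_deriv, hf, hf, v.map_deriv]
  exact ⟨⟨f, fun x ↦ hd x (h ▸ Subfield.mem_top x)⟩, hf⟩

namespace Specialization

/-- A rational expression is specialized by specializing its constituents, as soon as the
intermediate values of the expression and their inverses are in the domain. -/
theorem exists_finset_mem {X : Set M} {x : M} (hx : x ∈ Subfield.closure X) :
    ∃ t : Finset M, ∀ (M' : DFld.{u}) (φ : Specialization M M'), ↑t ⊆ (φ.domain : Set M) →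
      ∀ K : Subfield M', (∀ y (hy : y ∈ φ.domain), y ∈ X → φ ⟨y, hy⟩ ∈ K) →
        ∀ h : x ∈ φ.domain, φ ⟨x, h⟩ ∈ K := by
  classical
  induction hx using Subfield.closure_induction with
  | mem x hx => exact ⟨∅, fun M' φ _ K hK h ↦ hK x h hx⟩
  | one => exact ⟨∅, fun M' φ _ K _ _ ↦ (map_one φ.toRingHom).symm ▸ K.one_mem⟩
  | add x y _ _ hx hy =>
    obtain ⟨s, hs⟩ := hx
    obtain ⟨t, ht⟩ := hy
    refine ⟨{x, y} ∪ (s ∪ t), fun M' φ hφ K hK h ↦ ?_⟩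
    simp only [Finset.coe_union, Finset.coe_insert, Finset.coe_singleton, Set.union_subset_iff,
      Set.insert_subset_iff, Set.singleton_subset_iff, SetLike.mem_coe] at hφ
    obtain ⟨⟨hx, hy⟩, hsφ, htφ⟩ := hφ
    rw [show (⟨x + y, h⟩ : φ.domain) = ⟨x, hx⟩ + ⟨y, hy⟩ from rfl, map_add]
    exact add_mem (hs M' φ hsφ K hK hx) (ht M' φ htφ K hK hy)
  | mul x y _ _ hx hy =>
    obtain ⟨s, hs⟩ := hx
    obtain ⟨t, ht⟩ := hy
    refine ⟨{x, y} ∪ (s ∪ t), fun M' φ hφ K hK h ↦ ?_⟩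
    simp only [Finset.coe_union, Finset.coe_insert, Finset.coe_singleton, Set.union_subset_iff,
      Set.insert_subset_iff, Set.singleton_subset_iff, SetLike.mem_coe] at hφ
    obtain ⟨⟨hx, hy⟩, hsφ, htφ⟩ := hφ
    rw [show (⟨x * y, h⟩ : φ.domain) = ⟨x, hx⟩ * ⟨y, hy⟩ from rfl, map_mul]
    exact mul_mem (hs M' φ hsφ K hK hx) (ht M' φ htφ K hK hy)
  | neg x _ hx =>
    obtain ⟨s, hs⟩ := hx
    refine ⟨s, fun M' φ hφ K hK h ↦ ?_⟩
    have hx : x ∈ φ.domain := by simpa using neg_mem h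
    rw [show (⟨-x, h⟩ : φ.domain) = -⟨x, hx⟩ from rfl, map_neg]
    exact neg_mem (hs M' φ hφ K hK hx)
  | inv x _ hx =>
    obtain ⟨s, hs⟩ := hx
    obtain rfl | hx0 := eq_or_ne x 0
    · refine ⟨∅, fun M' φ _ K _ h ↦ ?_⟩
      rw [show (⟨0⁻¹, h⟩ : φ.domain) = 0 from Subtype.ext inv_zero, map_zero]
      exact zero_mem K
    refine ⟨insert x s, fun M' φ hφ K hK h ↦ ?_⟩
    simp only [Finset.coe_insert, Set.insert_subset_iff, SetLike.mem_coe] at hφ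
    rw [← inv_eq_of_mul_eq_one_right (φ.apply_mul_apply_inv hφ.1 h hx0)]
    exact inv_mem (hs M' φ hφ.2 K hK hφ.1)

theorem exists_extension (φ : Specialization N F) (hφ : Function.Injective φ)
    (hN : Subfield.closure (φ.domain : Set N) = ⊤) :
    ∃ f : N →ᵈ F, ∀ x (h : x ∈ φ.domain), f x = φ ⟨x, h⟩ := by
  let _ : Differential φ.domain := differentialOfLeibniz
    (AddMonoidHom.mk' (fun x ↦ ⟨(x : N)′, φ.deriv_mem x x.2⟩) fun a b ↦ Subtype.ext (map_add _ _ _))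
    fun a b ↦ Subtype.ext (leibniz _ _)
  let u : φ.domain →ᵈ N := ⟨φ.domain.subtype, fun _ ↦ rfl⟩
  have hu : Set.range u = φ.domain := Subtype.range_coe
  obtain ⟨f, hf⟩ := DHom.exists_extension (u := u) (v := ⟨φ.toRingHom, φ.map_deriv⟩)
    Subtype.val_injective hφ (hu ▸ hN)
  exact ⟨f, fun x h ↦ hf ⟨x, h⟩⟩

end Specialization

/-! ### Strongly normal extensions -/

theorem essFiniteType_iff_exists_closure_eq_top {L : Type*} [Field L] {k : Subfield L} :
    Algebra.EssFiniteType k L ↔ ∃ s : Finset L, Subfield.closure (k ∪ s : Set L) = ⊤ := by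
  have hs (s : Finset L) : (IntermediateField.adjoin k (s : Set L)).toSubfield =
      Subfield.closure (k ∪ s : Set L) :=
    congrArg (fun t ↦ Subfield.closure (t ∪ (s : Set L))) Subtype.range_coe
  simp only [← IntermediateField.fg_top_iff, IntermediateField.FG, ← hs]
  exact exists_congr fun s ↦ (IntermediateField.toSubfield_injective.eq_iff (b := ⊤)).symm

theorem _root_.IsSN.isDiff {B : Subfield F} (h : IsSN F.deriv B) : IsDiff B := h.1

theorem _root_.IsSN.essFiniteType {B : Subfield F} (h : IsSN F.deriv B) :
    Algebra.EssFiniteType B F := essFiniteType_iff_exists_closure_eq_top.2 h.2.1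

theorem _root_.IsSN.constants_le {B : Subfield F} (h : IsSN F.deriv B) : constants F ≤ B := h.2.2.1

theorem closure_range_union_constants (ι : F →ᵈ M) :
    Subfield.closure (Set.range ι.toRingHom ∪ {m | M.deriv m = 0}) = ι.range ⊔ constants M := by
  rw [← Subfield.closure_eq ι.range, ← Subfield.closure_eq (constants M), ← Subfield.closure_union]
  rfl

theorem _root_.IsSN.range_le {B : Subfield F} (h : IsSN F.deriv B) {ι σ : F →ᵈ M}
    (hισ : ∀ x ∈ B, σ x = ι x) : σ.range ≤ ι.range ⊔ constants M := by
  rw [← closure_range_union_constants]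
  rintro _ ⟨x, rfl⟩
  exact h.2.2.2 M ι.toRingHom σ.toRingHom ι.map_deriv σ.map_deriv hισ x

theorem isSN_of_range_le {B : Subfield F} [Algebra.EssFiniteType B F] (hB : IsDiff B)
    (hc : constants F ≤ B)
    (h : ∀ (M : DFld.{u}) (ι σ : F →ᵈ M), (∀ x ∈ B, σ x = ι x) → σ.range ≤ ι.range ⊔ constants M) :
    IsSN F.deriv B := by
  refine ⟨hB, essFiniteType_iff_exists_closure_eq_top.1 ‹_›, hc, fun M ι σ hι hσ hισ x ↦ ?_⟩
  have := h M ⟨ι, hι⟩ ⟨σ, hσ⟩ hισ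
  rw [← closure_range_union_constants] at this
  exact this ⟨x, rfl⟩

end

/-! ### Linear disjointness -/

section LinDisjoint

theorem injective_of_linearIndependent_comp_basis {R V W ι : Type*} [Ring R] [AddCommGroup V]
    [AddCommGroup W] [Module R V] [Module R W] {f : V →ₗ[R] W} (b : Module.Basis ι R V)
    (h : LinearIndependent R (f ∘ b)) : Function.Injective f := by
  refine (injective_iff_map_eq_zero f).2 fun x hx ↦ ?_
  rw [← b.linearCombination_repr x, Finsupp.apply_linearCombination] at hx
  rw [← b.linearCombination_repr x, linearIndependent_iff.1 h _ hx, map_zero]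

variable {M : Type u} [Field M]

/-- Linear disjointness of the subfields `K` and `L` of a field over the subfield `D`: subsets of
`K` that are linearly independent over `D` are so over `L`. The inclusions `D ≤ K` and `D ≤ L`
are not part of the definition. -/
def LinDisjoint (D K L : Subfield M) : Prop :=
  ∀ s : Set M, s ⊆ K → LinearIndepOn D id s → LinearIndepOn L id s

variable {D K L Q N : Subfield M}

theorem LinDisjoint.linearIndependent (h : LinDisjoint D K L) {ι : Type*} {v : ι → M}
    (hv : ∀ i, v i ∈ K) (hD : LinearIndependent D v) : LinearIndependent L v :=
  (linearIndepOn_id_range_iff hD.injective).1 <|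
    h _ (Set.range_subset_iff.2 hv) hD.linearIndepOn_id

/-- If `x ∈ K` is an `L`-linear combination of vectors of `K` that are independent over `L`, then
the maps `T i` kill the coefficients, which therefore lie in `D`. -/
theorem linDisjoint_of_forall_apply_eq_zero {ι : Type*} (T : ι → M →+ M) (hT : ∀ i, T i 1 = 0)
    (hTK : ∀ i, ∀ x ∈ K, ∀ y, T i (x * y) = x * T i y) (hTL : ∀ i, ∀ y ∈ L, T i y ∈ L)
    (hD : ∀ y ∈ L, (∀ i, T i y = 0) → y ∈ D) : LinDisjoint D K L := by
  classical
  intro s hs hsD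
  rw [linearIndepOn_iff_linearIndepOn_finset] at hsD ⊢
  intro t ht
  induction t using Finset.induction_on with
  | empty => simp
  | insert x t hxt ih =>
    rw [Finset.coe_insert, Set.insert_subset_iff] at ht
    have htL := ih ht.2
    have hxD := hsD (insert x t) (by simpa [Set.insert_subset_iff] using ht)
    rw [Finset.coe_insert, linearIndepOn_id_insert (by simpa)] at hxD ⊢
    refine ⟨htL, fun hx ↦ hxD.2 ?_⟩
    obtain ⟨c, -, rfl⟩ := Submodule.mem_span_finset.1 hx
    refine sum_mem fun y hy ↦ ?_
    suffices hc : (c y : M) ∈ D from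
      Submodule.smul_mem _ (⟨c y, hc⟩ : D) (Submodule.subset_span hy)
    refine hD _ (c y).2 fun i ↦ ?_
    have hsum : ∑ z ∈ t, (⟨T i (c z), hTL i _ (c z).2⟩ : L) • z = 0 :=
      calc ∑ z ∈ t, T i (c z) * z = ∑ z ∈ t, T i (c z * z) := Finset.sum_congr rfl fun z hz ↦ by
            rw [mul_comm, ← hTK i z (hs (ht.2 hz)), mul_comm]
        _ = T i ((∑ z ∈ t, c z • z) * 1) := by rw [mul_one, map_sum]; rfl
        _ = 0 := by rw [hTK i _ (hs ht.1), hT, mul_zero]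
    exact congrArg Subtype.val (linearIndepOn_finset_iff.1 htL _ hsum y hy)

theorem LinDisjoint.inf_le (h : LinDisjoint D K L) : K ⊓ L ≤ D := fun x ⟨hK, hL⟩ ↦ by
  by_contra hx
  have hD : LinearIndependent D ![1, x] := by
    refine (LinearIndependent.pair_iff' one_ne_zero).2 fun a ha ↦ hx ?_
    rw [← ha, Subfield.smul_def, smul_eq_mul, mul_one]
    exact a.2
  have hL' := h.linearIndependent (v := ![1, x]) (Fin.forall_fin_two.2 ⟨K.one_mem, hK⟩) hD
  refine (LinearIndependent.pair_iff' one_ne_zero).1 hL' ⟨x, hL⟩ ?_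
  rw [Subfield.smul_def, smul_eq_mul, mul_one]

theorem LinDisjoint.mono (h : LinDisjoint D K L) {K' L' : Subfield M} (hK : K' ≤ K)
    (hL : L' ≤ L) : LinDisjoint D K' L' := fun s hs hD ↦ by
  have := h s (hs.trans hK) hD
  rw [linearIndepOn_iff_linearIndepOn_finset] at this ⊢
  intro t ht
  have := this t ht
  rw [linearIndepOn_finset_iff] at this ⊢
  intro c hc x hx
  have := this (fun x ↦ ⟨c x, hL (c x).2⟩) hc x hx
  exact Subtype.ext (congrArg (fun x : L ↦ (x : M)) this)

theorem exists_linearIndepOn_span (D K : Subfield M) : ∃ e : Set M, e ⊆ K ∧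
    LinearIndepOn D id e ∧ (K : Set M) ⊆ Submodule.span D e := by
  obtain ⟨e, heK, hspan, he⟩ := exists_linearIndependent D (K : Set M)
  exact ⟨e, heK, he, hspan ▸ Submodule.subset_span⟩

theorem linearIndependent_of_subset_span {κ ι : Type*} {v : κ → M} {e : ι → M}
    (h : LinearIndependent Q fun p : κ × ι ↦ v p.1 * e p.2) {R : Subalgebra Q M}
    (hR : (R : Set M) ⊆ Submodule.span Q (Set.range e)) : LinearIndependent R v := by
  classical
  rw [linearIndependent_iff']
  intro s c hc k hk
  choose q hq using fun x : R ↦ Finsupp.mem_span_range_iff_exists_finsupp.1 (hR x.2)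
  let t := s.biUnion fun k ↦ (q (c k)).support
  have hcq (k : κ) (hk : k ∈ s) : (c k : M) = ∑ i ∈ t, q (c k) i • e i :=
    (hq (c k)).symm.trans <| Finset.sum_subset
      (Finset.subset_biUnion_of_mem (fun k ↦ (q (c k)).support) hk)
      fun i _ hi ↦ by
        simp only [Finsupp.notMem_support_iff.1 hi, zero_smul]
  have hsum : ∑ p ∈ s ×ˢ t, q (c p.1) p.2 • (v p.1 * e p.2) = 0 := by
    rw [Finset.sum_product, ← hc]
    refine Finset.sum_congr rfl fun k hk ↦ ?_
    rw [Subalgebra.smul_def, smul_eq_mul, hcq k hk, Finset.sum_mul]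
    exact Finset.sum_congr rfl fun i _ ↦ by rw [smul_mul_assoc, mul_comm (v k)]
  refine Subtype.ext ((hcq k hk).trans (Finset.sum_eq_zero fun i hi ↦ ?_))
  rw [linearIndependent_iff'.1 h _ _ hsum (k, i) (Finset.mk_mem_product hk hi), zero_smul]

open IntermediateField.algebraAdjoinAdjoin in
theorem linearIndependent_sup {κ : Type*} {v : κ → M}
    (h : LinearIndependent (Algebra.adjoin Q (K : Set M)) v) :
    LinearIndependent ↥(K ⊔ Q) v := by
  have hsup : K ⊔ Q = (IntermediateField.adjoin Q (K : Set M)).toSubfield := by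
    have hQ : Set.range (algebraMap Q M) = Q := Subtype.range_coe
    rw [IntermediateField.adjoin_toSubfield, hQ, Subfield.closure_union, Subfield.closure_eq,
      Subfield.closure_eq, sup_comm]
  rw [hsup]
  exact (LinearIndependent.iff_fractionRing (Algebra.adjoin Q (K : Set M))
    (IntermediateField.adjoin Q (K : Set M))).1 h

theorem LinDisjoint.sup_right (h : LinDisjoint D K L) (hDQ : D ≤ Q) (hQL : Q ≤ L) :
    LinDisjoint Q L (K ⊔ Q) := by
  let _ := (Subfield.inclusion hDQ).toAlgebra
  let _ := (Subfield.inclusion hQL).toAlgebra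
  have : IsScalarTower D Q M := .of_algebraMap_eq fun _ ↦ rfl
  have : IsScalarTower Q L M := .of_algebraMap_eq fun _ ↦ rfl
  obtain ⟨e, heK, he, hKe⟩ := exists_linearIndepOn_span D K
  intro s hs hsQ
  have hadj : (Algebra.adjoin Q (K : Set M) : Set M) ⊆
      Submodule.span Q (Set.range ((↑) : e → M)) := by
    have hcl : Submonoid.closure (K : Set M) = K.toSubmonoid := K.toSubmonoid.closure_eq
    rw [← Subalgebra.coe_toSubmodule, Algebra.adjoin_eq_span, hcl, Subtype.range_coe]
    exact Submodule.span_le.2 (hKe.trans (Submodule.span_subset_span D Q e))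
  have hsL : LinearIndependent Q fun x : s ↦ (⟨x, hs x.2⟩ : L) :=
    LinearIndependent.of_comp (IsScalarTower.toAlgHom Q L M).toLinearMap hsQ
  have heL : LinearIndependent L ((↑) : e → M) := h e heK he
  have hprod : LinearIndependent Q fun p : s × e ↦ (p.1 : M) * p.2 := by
    simpa only [Subfield.smul_def, smul_eq_mul] using linearIndependent_smul hsL heL
  exact linearIndependent_sup (linearIndependent_of_subset_span hprod hadj)

theorem LinDisjoint.trans (h : LinDisjoint D K Q) (h' : LinDisjoint Q L N) (hKL : K ≤ L) :
    LinDisjoint D K N := fun s hs hD ↦ h' s (hs.trans hKL) (h s hs hD)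

theorem linearIndependent_map_iff {M' : Type u} [Field M'] (f : M →+* M') {κ : Type*} {v : κ → M} :
    LinearIndependent (D.map f) (f ∘ v) ↔ LinearIndependent D v := by
  let i : D →+* D.map f := (f.comp D.subtype).codRestrict _ fun x ↦ ⟨x, x.2, rfl⟩
  have hi : Function.Surjective i := by
    rintro ⟨_, x, hx, rfl⟩
    exact ⟨⟨x, hx⟩, rfl⟩
  refine ⟨fun h ↦ linearIndependent_iff'.2 fun s c hc k hk ↦ ?_, fun h ↦
    h.map_of_surjective_injectiveₛ i f.toAddMonoidHom hi f.injective fun _ _ ↦ map_mul f _ _⟩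
  refine (map_eq_zero i).1 (linearIndependent_iff'.1 h s (i ∘ c) ?_ k hk)
  have hcf : ∑ k ∈ s, f (c k) * f (v k) = 0 := by
    simpa [Subfield.smul_def] using congrArg f hc
  exact hcf

theorem linDisjoint_map_iff {M' : Type u} [Field M'] (f : M →+* M') :
    LinDisjoint (D.map f) (K.map f) (L.map f) ↔ LinDisjoint D K L := by
  refine ⟨fun h s hs hD ↦ ?_, fun h s hs hD ↦ ?_⟩
  · rw [LinearIndepOn, ← linearIndependent_map_iff f] at hD ⊢
    exact h.linearIndependent (fun x ↦ ⟨x, hs x.2, rfl⟩) hD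
  · choose v hvK hv using fun x : s ↦ Subfield.mem_map.1 (hs x.2)
    have hfv : f ∘ v = fun x : s ↦ id (x : M') := funext hv
    rw [LinearIndepOn, ← hfv, linearIndependent_map_iff] at hD ⊢
    exact h.linearIndependent hvK hD

end LinDisjoint

section LinDisjoint

variable {M : DFld.{u}} {K L Q : Subfield M}

theorem linDisjoint_constants (hL : IsDiff L) :
    LinDisjoint (constants M ⊓ L) (constants M) L :=
  linDisjoint_of_forall_apply_eq_zero
    (fun _ : Unit ↦ (Differential.deriv : Derivation ℤ M M).toLinearMap.toAddMonoidHom)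
    (fun _ ↦ (Derivation.map_one_eq_zero _ : (1 : M)′ = 0))
    (fun _ x hx y ↦ by
      change (x * y)′ = x * (y′)
      rw [leibniz, mem_constants.1 hx, mul_zero, add_zero])
    (fun _ ↦ hL) fun _ hy h ↦ ⟨mem_constants.2 (h ()), hy⟩

theorem linDisjoint_sup_constants (hL : IsDiff L) (hLQ : constants M ⊓ L ≤ Q) (hQL : Q ≤ L) :
    LinDisjoint Q L (constants M ⊔ Q) :=
  (linDisjoint_constants hL).sup_right hLQ hQL

theorem linDisjoint_of_forall_mem {S : Set (M →ᵈ M)} (hK : ∀ σ ∈ S, ∀ x ∈ K, σ x = x)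
    (hS : ∀ x, (∀ σ ∈ S, σ x = x) → x ∈ K) (hL : ∀ σ ∈ S, ∀ x ∈ L, σ x ∈ L) :
    LinDisjoint (K ⊓ L) K L :=
  linDisjoint_of_forall_apply_eq_zero
    (fun σ : S ↦ (σ.1.toRingHom : M →+ M) - .id M)
    (fun σ ↦ (sub_eq_zero.2 (map_one σ.1) : σ.1 1 - 1 = 0))
    (fun σ x hx y ↦ by
      change σ.1 (x * y) - x * y = x * (σ.1 y - y)
      rw [map_mul, hK σ σ.2 x hx, mul_sub])
    (fun σ y hy ↦ sub_mem (hL σ σ.2 y hy) hy)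
    fun y hy h ↦ ⟨hS y fun σ hσ ↦ sub_eq_zero.1 (h ⟨σ, hσ⟩), hy⟩

theorem mem_sup_constants_of_map_mem {M' : DFld.{u}} (f : M →ᵈ M') {x : M}
    (hx : f x ∈ Q.map f.toRingHom ⊔ constants M') : x ∈ Q ⊔ constants M := by
  have hle : (Q ⊔ constants M).map f.toRingHom ≤ f.range := by
    rintro _ ⟨y, -, rfl⟩
    exact ⟨y, rfl⟩
  have hcon : constants M' ⊓ f.range ≤ (Q ⊔ constants M).map f.toRingHom := by
    rintro _ ⟨hy, y, rfl⟩
    exact ⟨y, (le_sup_right : _ ≤ Q ⊔ constants M) (f.map_mem_constants_iff.1 hy), rfl⟩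
  have hmono : Q.map f.toRingHom ≤ (Q ⊔ constants M).map f.toRingHom :=
    (Subfield.gc_map_comap f.toRingHom).monotone_l le_sup_left
  have hsup : Q.map f.toRingHom ⊔ constants M' ≤
      constants M' ⊔ (Q ⊔ constants M).map f.toRingHom :=
    sup_le (hmono.trans le_sup_right) le_sup_left
  obtain ⟨y, hy, hyx⟩ := (linDisjoint_sup_constants f.isDiff_range hcon hle).inf_le
    ⟨⟨x, rfl⟩, hsup hx⟩
  exact f.injective hyx ▸ hy

end LinDisjoint

section

variable {A E K M N : DFld.{u}}

theorem exists_amalgam_of_injective {R : Type u} [CommRing R] [Differential R] {u : R →ᵈ N}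
    {v : R →ᵈ M} (hu : Function.Injective u) (hv : Function.Injective v) :
    ∃ (M' : DFld.{u}) (ι : M →ᵈ M') (τ : N →ᵈ M'), ∀ x, ι (v x) = τ (u x) := by
  have : IsDomain R := hu.isDomain u.toRingHom
  have : CharZero R := (RingHom.charZero_iff hu).2 inferInstance
  let A := of (FractionRing R)
  let i : R →ᵈ A := localizationHom _
  have hi : Function.Injective i := IsFractionRing.injective R (FractionRing R)
  have hA : Subfield.closure (Set.range i) = ⊤ := by
    refine eq_top_iff.2 fun x _ ↦ ?_
    obtain ⟨a, b, -, rfl⟩ := IsFractionRing.div_surjective (A := R) x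
    exact div_mem (Subfield.subset_closure ⟨a, rfl⟩) (Subfield.subset_closure ⟨b, rfl⟩)
  obtain ⟨f, hf⟩ := DHom.exists_extension hi hv hA
  obtain ⟨g, hg⟩ := DHom.exists_extension hi hu hA
  obtain ⟨M', ι, τ, h⟩ := exists_amalgam f g
  exact ⟨M', ι, τ, fun x ↦ by rw [← hf, ← hg]; exact congrArg (· (i x)) h⟩

namespace LinDisjoint

theorem linearIndependent_comp [Algebra A K] [Algebra E M] {f : E →ᵈ M} {g : K →ᵈ M}
    (h : LinDisjoint ((algebraMap A K).fieldRange.map g.toRingHom) g.range f.range)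
    (hf : ∀ x, algebraMap E M x = f x) {κ : Type*} {b : κ → K} (hb : LinearIndependent A b) :
    LinearIndependent E (g ∘ b) := by
  have hD := hb.map_of_surjective_injectiveₛ
    (R' := (algebraMap A K).fieldRange.map g.toRingHom)
    (fun a ↦ ⟨g (algebraMap A K a), algebraMap A K a, ⟨a, rfl⟩, rfl⟩)
    g.toRingHom.toAddMonoidHom (by rintro ⟨_, _, ⟨a, rfl⟩, rfl⟩; exact ⟨a, rfl⟩)
    g.injective fun a x ↦ by
      rw [Algebra.smul_def]
      exact map_mul g _ _
  exact (h.linearIndependent (fun k ↦ g.mem_range_self (b k)) hD).map_of_injective_injectiveₛ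
    (fun x : E ↦ ⟨f x, f.mem_range_self x⟩) (.id M)
    (fun x y h ↦ f.injective (congrArg Subtype.val h)) Function.injective_id fun x y ↦ by
      rw [Algebra.smul_def x, hf]
      rfl

theorem exists_tensor_hom [Algebra A E] [Algebra A K] [DifferentialAlgebra A E]
    [DifferentialAlgebra A K] {f : E →ᵈ M} {g : K →ᵈ M}
    (hfg : ∀ a, f (algebraMap A E a) = g (algebraMap A K a))
    (h : LinDisjoint ((algebraMap A K).fieldRange.map g.toRingHom) g.range f.range) :
    ∃ u : E ⊗[A] K →ᵈ M, Function.Injective u ∧ ∀ x y, u (x ⊗ₜ y) = f x * g y := by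
  let _ := f.toRingHom.toAlgebra
  let _ := (f.toRingHom.comp (algebraMap A E)).toAlgebra
  have : IsScalarTower A E M := .of_algebraMap_eq fun _ ↦ rfl
  let u : E ⊗[A] K →ₐ[E] M :=
    Algebra.TensorProduct.lift (Algebra.ofId E M) ⟨g.toRingHom, fun a ↦ (hfg a).symm⟩
      fun _ _ ↦ Commute.all _ _
  have hu (x : E) (y : K) : u (x ⊗ₜ y) = f x * g y := Algebra.TensorProduct.lift_tmul ..
  refine ⟨⟨u.toRingHom, fun x ↦ ?_⟩, ?_, hu⟩
  · change u (tensorDeriv A E K x) = Differential.deriv (u x)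
    induction x with
    | zero => simp
    | add x y hx hy => rw [map_add, map_add, map_add, map_add, hx, hy]
    | tmul x y =>
      rw [tensorDeriv_tmul, map_add, hu, hu, hu, leibniz, f.map_deriv, g.map_deriv]
      ring
  · let b := Module.Basis.ofVectorSpace A K
    have hb : LinearIndependent E (u.toLinearMap ∘ b.baseChange E) := by
      have hgb : u.toLinearMap ∘ b.baseChange E = g ∘ b := funext fun k ↦ by
        change u (b.baseChange E k) = g (b k)
        rw [Module.Basis.baseChange_apply, hu, map_one, one_mul]
      exact hgb ▸ h.linearIndependent_comp (fun _ ↦ rfl) b.linearIndependent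
    exact injective_of_linearIndependent_comp_basis (b.baseChange E) hb

protected theorem exists_amalgam {i : A →ᵈ E} {j : A →ᵈ K} {f : E →ᵈ N} {g : K →ᵈ N}
    {f' : E →ᵈ M} {g' : K →ᵈ M} (hfg : f.comp i = g.comp j) (hfg' : f'.comp i = g'.comp j)
    (h : LinDisjoint (g.comp j).range g.range f.range)
    (h' : LinDisjoint (g'.comp j).range g'.range f'.range) :
    ∃ (M' : DFld.{u}) (ι : M →ᵈ M') (τ : N →ᵈ M'),
      (∀ x, ι (f' x) = τ (f x)) ∧ ∀ x, ι (g' x) = τ (g x) := by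
  let _ := i.toRingHom.toAlgebra
  let _ := j.toRingHom.toAlgebra
  have : DifferentialAlgebra A E := ⟨fun a ↦ (i.map_deriv a).symm⟩
  have : DifferentialAlgebra A K := ⟨fun a ↦ (j.map_deriv a).symm⟩
  have hmap {L : DFld.{u}} (g : K →ᵈ L) :
      (algebraMap A K).fieldRange.map g.toRingHom = (g.comp j).range := RingHom.map_fieldRange _ _
  obtain ⟨u, hu, huf⟩ := exists_tensor_hom (f := f) (g := g) (DFunLike.congr_fun hfg) (hmap g ▸ h)
  obtain ⟨v, hv, hvf⟩ :=
    exists_tensor_hom (f := f') (g := g') (DFunLike.congr_fun hfg') (hmap g' ▸ h')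
  obtain ⟨M', ι, τ, hιτ⟩ := exists_amalgam_of_injective hu hv
  refine ⟨M', ι, τ, fun x ↦ ?_, fun x ↦ ?_⟩
  · simpa [huf, hvf] using hιτ (x ⊗ₜ 1)
  · simpa [huf, hvf] using hιτ (1 ⊗ₜ x)

end LinDisjoint

end

/-! ### Ultraproducts -/

section Ultraproduct

open Filter

variable {I : Type u} (𝒰 : Ultrafilter I) {M : I → DFld.{u}} {N : DFld.{u}}

instance : Differential (∀ i, M i) := differentialOfLeibniz
  (AddMonoidHom.mk' (fun a i ↦ (a i)′) fun _ _ ↦ funext fun _ ↦ map_add _ _ _)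
  fun _ _ ↦ funext fun _ ↦ leibniz _ _

/-- The ideal of families vanishing almost everywhere with respect to an ultrafilter. -/
def ultraproductIdeal (M : I → DFld.{u}) : Ideal (∀ i, M i) where
  carrier := {a | ∀ᶠ i in 𝒰, a i = 0}
  zero_mem' := .of_forall fun _ ↦ rfl
  add_mem' ha hb := by
    filter_upwards [ha, hb] with i ha hb
    rw [Pi.add_apply, ha, hb, add_zero]
  smul_mem' c a ha := by
    filter_upwards [ha] with i ha
    rw [Pi.smul_apply', ha, smul_zero]

theorem isDiffIdeal_ultraproductIdeal : IsDiffIdeal (ultraproductIdeal 𝒰 M) := fun a ha ↦ by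
  filter_upwards [ha] with i ha
  change (a i)′ = 0
  rw [ha, map_zero]

instance isMaximal_ultraproductIdeal : (ultraproductIdeal 𝒰 M).IsMaximal := by
  refine Ideal.isMaximal_iff.2 ⟨fun h ↦ ?_, fun J a hJ ha haJ ↦ ?_⟩
  · obtain ⟨i, hi⟩ := h.exists
    exact one_ne_zero hi
  · have hmem : 1 - a⁻¹ * a ∈ ultraproductIdeal 𝒰 M := by
      filter_upwards [Ultrafilter.eventually_not.2 ha] with i hi
      exact sub_eq_zero.2 (inv_mul_cancel₀ hi).symm
    exact sub_add_cancel 1 (a⁻¹ * a) ▸ J.add_mem (hJ hmem) (J.mul_mem_left _ haJ)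

/-- The ultraproduct of a family of differential fields. -/
noncomputable def ultraproduct (M : I → DFld.{u}) : DFld.{u} :=
  let _ := Ideal.Quotient.field (ultraproductIdeal 𝒰 M)
  let _ := quotientDifferential (isDiffIdeal_ultraproductIdeal 𝒰 (M := M))
  have := algebraRat.charZero ((∀ i, M i) ⧸ ultraproductIdeal 𝒰 M)
  of ((∀ i, M i) ⧸ ultraproductIdeal 𝒰 M)

namespace ultraproduct

/-- The class of a family in the ultraproduct. -/
noncomputable def mk : (∀ i, M i) →ᵈ ultraproduct 𝒰 M where
  toRingHom := Ideal.Quotient.mk (ultraproductIdeal 𝒰 M)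
  map_deriv' _ := rfl

variable {𝒰}

theorem mk_surjective : Function.Surjective (mk 𝒰 (M := M)) := Ideal.Quotient.mk_surjective

theorem mk_eq_mk {a b : ∀ i, M i} : mk 𝒰 a = mk 𝒰 b ↔ ∀ᶠ i in 𝒰, a i = b i := by
  refine Ideal.Quotient.eq.trans (eventually_congr (.of_forall fun i ↦ ?_))
  exact sub_eq_zero

theorem mk_mem_constants {a : ∀ i, M i} :
    mk 𝒰 a ∈ constants (ultraproduct 𝒰 M) ↔ ∀ᶠ i in 𝒰, a i ∈ constants (M i) := by
  rw [mem_constants, ← DHom.map_deriv, ← map_zero (mk 𝒰), mk_eq_mk]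
  rfl

/-- The homomorphism given by a family of everywhere defined homomorphisms. -/
noncomputable def lift (f : ∀ i, N →ᵈ M i) : N →ᵈ ultraproduct 𝒰 M :=
  (mk 𝒰).comp ⟨RingHom.pi fun i ↦ (f i).toRingHom, fun x ↦ funext fun i ↦ (f i).map_deriv x⟩

open Classical in
theorem exists_hom_of_eventually_mem (φ : ∀ i, Specialization N (M i))
    (hφ : ∀ x, ∀ᶠ i in 𝒰, x ∈ (φ i).domain) :
    ∃ τ : N →ᵈ ultraproduct 𝒰 M,
      ∀ x a, τ x = mk 𝒰 a ↔ ∀ᶠ i in 𝒰, ∀ h : x ∈ (φ i).domain, φ i ⟨x, h⟩ = a i := by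
  let t (x : N) (i : I) : M i := if h : x ∈ (φ i).domain then φ i ⟨x, h⟩ else 0
  have ht {x : N} {i : I} (h : x ∈ (φ i).domain) : t x i = φ i ⟨x, h⟩ := dif_pos h
  have hmk {x : N} {a : ∀ i, M i} :
      mk 𝒰 (t x) = mk 𝒰 a ↔ ∀ᶠ i in 𝒰, ∀ h : x ∈ (φ i).domain, φ i ⟨x, h⟩ = a i := by
    rw [mk_eq_mk]
    refine eventually_congr ((hφ x).mono fun i hx ↦ ?_)
    rw [ht hx]
    exact ⟨fun h _ ↦ h, fun h ↦ h hx⟩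
  let τ : N →+* ultraproduct 𝒰 M := RingHom.mk'
    { toFun x := mk 𝒰 (t x)
      map_one' := (hmk.2 (.of_forall fun i _ ↦ map_one (φ i).toRingHom)).trans (map_one (mk 𝒰))
      map_mul' x y := by
        rw [← map_mul, hmk]
        filter_upwards [hφ x, hφ y] with i hx hy _
        rw [Pi.mul_apply, ht hx, ht hy]
        exact map_mul (φ i).toRingHom ⟨x, hx⟩ ⟨y, hy⟩ } fun x y ↦ by
    change mk 𝒰 (t (x + y)) = mk 𝒰 (t x) + mk 𝒰 (t y)
    rw [← map_add, hmk]
    filter_upwards [hφ x, hφ y] with i hx hy _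
    rw [Pi.add_apply, ht hx, ht hy]
    exact map_add (φ i).toRingHom ⟨x, hx⟩ ⟨y, hy⟩
  refine ⟨⟨τ, fun x ↦ ?_⟩, fun x a ↦ hmk⟩
  change mk 𝒰 (t x′) = Differential.deriv (mk 𝒰 (t x))
  rw [← DHom.map_deriv, hmk]
  filter_upwards [hφ x] with i hx _
  refine ((φ i).map_deriv ⟨x, hx⟩).trans ?_
  rw [← ht hx]
  rfl

/-- The ultraproduct of a family of subfields. -/
noncomputable def subfield (K : ∀ i, Subfield (M i)) : Subfield (ultraproduct 𝒰 M) where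
  carrier := mk 𝒰 '' {a | ∀ᶠ i in 𝒰, a i ∈ K i}
  mul_mem' := by
    rintro _ _ ⟨a, ha, rfl⟩ ⟨b, hb, rfl⟩
    exact ⟨a * b, ha.mp (hb.mono fun i hb ha ↦ mul_mem ha hb), map_mul _ _ _⟩
  one_mem' := ⟨1, .of_forall fun i ↦ one_mem (K i), map_one _⟩
  add_mem' := by
    rintro _ _ ⟨a, ha, rfl⟩ ⟨b, hb, rfl⟩
    exact ⟨a + b, ha.mp (hb.mono fun i hb ha ↦ add_mem ha hb), map_add _ _ _⟩
  zero_mem' := ⟨0, .of_forall fun i ↦ zero_mem (K i), map_zero _⟩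
  neg_mem' := by
    rintro _ ⟨a, ha, rfl⟩
    exact ⟨-a, ha.mono fun i ha ↦ neg_mem ha, map_neg _ _⟩
  inv_mem' := by
    rintro _ ⟨a, ha, rfl⟩
    refine ⟨a⁻¹, ha.mono fun i ha ↦ inv_mem ha, ?_⟩
    obtain h | h := eq_or_ne (mk 𝒰 a) 0
    · rw [h, inv_zero, ← map_zero (mk 𝒰), mk_eq_mk]
      rw [← map_zero (mk 𝒰), mk_eq_mk] at h
      exact h.mono fun i hi ↦ by simp [hi]
    · refine eq_inv_of_mul_eq_one_left ?_
      rw [← map_zero (mk 𝒰), Ne, mk_eq_mk] at h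
      rw [← map_mul, ← map_one (mk 𝒰), mk_eq_mk]
      exact (Ultrafilter.eventually_not.2 h).mono fun i hi ↦ inv_mul_cancel₀ hi

theorem mk_mem_subfield {K : ∀ i, Subfield (M i)} {a : ∀ i, M i} :
    mk 𝒰 a ∈ subfield K ↔ ∀ᶠ i in 𝒰, a i ∈ K i := by
  refine ⟨fun ⟨b, hb, hba⟩ ↦ ?_, fun h ↦ ⟨a, h, rfl⟩⟩
  filter_upwards [hb, mk_eq_mk.1 hba] with i hb hba
  rwa [← hba]

end ultraproduct

end Ultraproduct

/-! ### Rigidity of strongly normal extensions -/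

theorem algebraicIndependent_iff_linearIndependent {R A ι : Type*} [CommRing R] [CommRing A]
    [Algebra R A] {x : ι → A} :
    AlgebraicIndependent R x ↔ LinearIndependent R fun d : ι →₀ ℕ ↦ d.prod fun i n ↦ x i ^ n := by
  have hx : (fun d : ι →₀ ℕ ↦ d.prod fun i n ↦ x i ^ n) =
      (MvPolynomial.aeval x).toLinearMap ∘ MvPolynomial.basisMonomials ι R := funext fun d ↦ by
    rw [MvPolynomial.coe_basisMonomials, Function.comp_apply, AlgHom.toLinearMap_apply,
      MvPolynomial.aeval_monomial, map_one, one_mul]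
  rw [hx]
  exact ⟨fun h ↦ (MvPolynomial.basisMonomials ι R).linearIndependent.map' _
    (LinearMap.ker_eq_bot.2 h), injective_of_linearIndependent_comp_basis _⟩

/-- The kernel of `ψ` meets the polynomial ring in `x` trivially, hence vanishes. -/
theorem injective_of_isTranscendenceBasis {B R N ι : Type*} [Field B]
    [CommRing R] [IsDomain R] [CommRing N] [Algebra B R] [Algebra B N] {x : ι → R}
    (hx : IsTranscendenceBasis B x) {ψ : R →ₐ[B] N} (hψ : AlgebraicIndependent B (ψ ∘ x)) :
    Function.Injective ψ := by
  refine (injective_iff_map_eq_zero ψ).2 fun a ha ↦ by_contra fun ha0 ↦ ?_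
  have := hx.isAlgebraic
  refine Ideal.comap_ne_bot_of_algebraic_mem (I := RingHom.ker ψ) ha0 ha
    (Algebra.IsAlgebraic.isAlgebraic (R := Algebra.adjoin B (Set.range x)) a) ?_
  refine (Submodule.eq_bot_iff _).2 fun ⟨b, hb⟩ hbψ ↦ Subtype.ext ?_
  rw [Algebra.adjoin_range_eq_range_aeval] at hb
  obtain ⟨p, rfl⟩ := hb
  have hp : MvPolynomial.aeval (ψ ∘ x) p = 0 := by
    rw [← hbψ]
    exact (MvPolynomial.comp_aeval_apply (f := x) ψ p).symm
  change MvPolynomial.aeval x p = 0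
  rw [(injective_iff_map_eq_zero _).1 hψ p hp, map_zero]

open scoped IntermediateField.algebraAdjoinAdjoin in
theorem exists_algebraicIndependent_of_mem_adjoin {L M T : Type u} [Field L] [Field M]
    [Algebra L M] {S : Set M} {z : T → M} (hz : AlgebraicIndependent L z)
    (hzS : ∀ i, z i ∈ IntermediateField.adjoin L S) :
    ∃ J ⊆ S, AlgebraicIndepOn L id J ∧ Cardinal.mk T ≤ Cardinal.mk J := by
  let R := Algebra.adjoin L S
  let A := IntermediateField.adjoin L S
  have : Algebra.IsAlgebraic R A := IsLocalization.isAlgebraic A (nonZeroDivisors R)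
  have : Algebra.IsAlgebraic (Algebra.adjoin L (Subtype.val ⁻¹' S : Set R)) R := by
    rw [Algebra.adjoin_adjoin_coe_preimage]
    exact ⟨fun x ↦ isAlgebraic_algebraMap (⟨x, Algebra.mem_top⟩ : (⊤ : Subalgebra L R))⟩
  obtain ⟨J, hJS, hJ⟩ := exists_isTranscendenceBasis_subset (R := L) (Subtype.val ⁻¹' S : Set R)
  have hz' : AlgebraicIndependent L fun i ↦ (⟨z i, hzS i⟩ : A) := .of_comp A.val hz
  refine ⟨Subtype.val '' J, Set.image_subset_iff.2 hJS,
    (hJ.1.map' (f := R.val) Subtype.val_injective).image, ?_⟩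
  rw [Cardinal.mk_image_eq Subtype.val_injective, (hJ.algebraMap_comp (A := A)).cardinalMk_eq_trdeg]
  exact hz'.cardinalMk_le_trdeg

/-- Both `R` and its image in `M` have transcendence degree at least the cardinality of `T`. -/
theorem injective_of_mem_adjoin_range {B L M R T : Type u} [Field B] [Field L] [Field M]
    [CommRing R] [IsDomain R] [Algebra B L] [Algebra L M] [Algebra B M] [IsScalarTower B L M]
    [Algebra B R] [Finite T] {x : T → R} (hx : IsTranscendenceBasis B x) (ψ : R →ₐ[B] M)
    {z : T → M} (hz : AlgebraicIndependent L z)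
    (hzψ : ∀ i, z i ∈ IntermediateField.adjoin L (Set.range ψ)) : Function.Injective ψ := by
  obtain ⟨J, hJψ, hJ, hTJ⟩ := exists_algebraicIndependent_of_mem_adjoin hz hzψ
  choose y hy using fun j : J ↦ hJψ j.2
  have hψy : AlgebraicIndependent B (ψ ∘ y) :=
    .restrictScalars (K := L) (algebraMap B L).injective <| by
      rwa [show ψ ∘ y = _ from funext hy]
  have hy : AlgebraicIndependent B y := .of_comp ψ hψy
  rw [hx.cardinalMk_eq_trdeg] at hTJ
  refine injective_of_isTranscendenceBasis (hy.isTranscendenceBasis_of_trdeg_le ?_ hTJ) hψy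
  rw [← hx.cardinalMk_eq_trdeg]
  exact Cardinal.mk_lt_aleph0

theorem LinDisjoint.algebraicIndependent {M : Type u} [Field M] {D K L : Subfield M}
    (h : LinDisjoint D K L) {ι : Type*} {x : ι → M} (hx : ∀ i, x i ∈ K)
    (hD : AlgebraicIndependent D x) : AlgebraicIndependent L x := by
  rw [algebraicIndependent_iff_linearIndependent] at hD ⊢
  exact h.linearIndependent (fun d ↦ prod_mem fun i _ ↦ pow_mem (hx i) _) hD

theorem algebraicIndependent_map_iff {M M' : Type u} [Field M] [Field M'] {D : Subfield M}
    (f : M →+* M') {ι : Type*} {x : ι → M} :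
    AlgebraicIndependent (D.map f) (f ∘ x) ↔ AlgebraicIndependent D x := by
  rw [algebraicIndependent_iff_linearIndependent, algebraicIndependent_iff_linearIndependent,
    ← linearIndependent_map_iff f]
  simp only [Function.comp_def, map_finsuppProd, map_pow]

section

variable {F M N : DFld.{u}}

theorem DHom.range_le_iff {s : Set N} (hs : Subfield.closure s = ⊤) {f : N →ᵈ M}
    {K : Subfield M} : f.range ≤ K ↔ ∀ x ∈ s, f x ∈ K := by
  refine ⟨fun h x _ ↦ h ⟨x, rfl⟩, fun h ↦ ?_⟩
  have hle : Subfield.closure s ≤ K.comap f.toRingHom := Subfield.closure_le.2 h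
  rintro _ ⟨x, rfl⟩
  exact hle (hs ▸ Subfield.mem_top x)

namespace Specialization

/-- Otherwise `φ` would lower the transcendence degree over `B`, whereas `ι.range` has the same
transcendence degree over `ι(B)` as over its compositum with the constants. -/
theorem injective_of_range_le {B : Subfield N} (h : IsSN N.deriv B) (φ : Specialization N F)
    (hB : ∀ x ∈ B, x ∈ φ.domain) {ι : N →ᵈ M} {τ : F →ᵈ M}
    (hιτ : ∀ x (hx : x ∈ B), τ (φ ⟨x, hB x hx⟩) = ι x)
    (hle : ι.range ≤ Subfield.closure (Set.range fun x ↦ τ (φ x)) ⊔ constants M) :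
    Function.Injective φ := by
  let Q := B.map ι.toRingHom
  let L := constants M ⊔ Q
  let _ := (ι.toRingHom.comp B.subtype).toAlgebra
  let _ := ((ι.toRingHom.comp B.subtype).codRestrict L fun x ↦
    le_sup_right (a := constants M) (show ι x ∈ Q from ⟨x, x.2, rfl⟩)).toAlgebra
  have : IsScalarTower B L M := .of_algebraMap_eq fun _ ↦ rfl
  let _ := (Subring.inclusion (S := B.toSubring) hB).toAlgebra
  let ψ : φ.domain →ₐ[B] M := ⟨τ.toRingHom.comp φ.toRingHom, fun x ↦ hιτ x x.2⟩
  obtain ⟨T, hT⟩ := exists_isTranscendenceBasis B φ.domain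
  have hTN : AlgebraicIndependent B fun t : T ↦ (t : N) :=
    hT.1.map' (f := (⟨φ.domain.subtype, fun _ ↦ rfl⟩ : φ.domain →ₐ[B] N)) Subtype.val_injective
  have := h.essFiniteType
  have := finite_of_algebraicIndependent hTN
  have hz : AlgebraicIndependent L fun t : T ↦ ι t := by
    refine (linDisjoint_sup_constants ι.isDiff_range ?_ ?_).algebraicIndependent
      (fun t ↦ ι.mem_range_self _) ((algebraicIndependent_map_iff ι.toRingHom).2 hTN)
    · rintro _ ⟨hx, x, rfl⟩
      exact ⟨x, h.constants_le (ι.map_mem_constants_iff.1 hx), rfl⟩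
    · rintro _ ⟨x, -, rfl⟩
      exact ι.mem_range_self x
  have hψ : ι.range ≤ (IntermediateField.adjoin L (Set.range ψ)).toSubfield := by
    refine hle.trans (sup_le ?_ fun x hx ↦ ?_)
    · exact Subfield.closure_le.2 (IntermediateField.subset_adjoin L _)
    · exact (IntermediateField.adjoin L _).algebraMap_mem ⟨x, le_sup_left (b := Q) hx⟩
  exact .of_comp (f := τ) (injective_of_mem_adjoin_range hT ψ hz fun t ↦ hψ (ι.mem_range_self _))

/-- Composition of a specialization with an everywhere defined homomorphism. -/
def postcomp (φ : Specialization N F) (f : F →ᵈ M) : Specialization N M where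
  domain := φ.domain
  deriv_mem := φ.deriv_mem
  toRingHom := f.toRingHom.comp φ.toRingHom
  map_deriv x := (congrArg f (φ.map_deriv x)).trans (f.map_deriv _)

end Specialization

open Filter ultraproduct in
/-- Otherwise an ultraproduct of noninjective specializations, all but finitely many of which are
defined at a given element, is a homomorphism defined on all of `N`. Strong normality of `N` in
the ultraproduct descends to one of the factors, where it contradicts
`Specialization.injective_of_range_le`. -/
theorem _root_.IsSN.exists_finset_injective {B : Subfield N} (h : IsSN N.deriv B) :
    ∃ s : Finset N, ∀ (F : DFld.{u}) (φ : Specialization N F),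
      (B ∪ s : Set N) ⊆ φ.domain → Function.Injective φ := by
  by_contra! H
  choose F φ hφ hinj using H
  have hB (s) : ∀ x ∈ B, x ∈ (φ s).domain := fun x hx ↦ hφ s (.inl hx)
  choose M i j hij using fun s ↦ exists_amalgam h.isDiff.subtype
    ((φ s).compDHom h.isDiff.subtype fun x ↦ hB s _ x.2)
  replace hij (s) : ∀ x (hx : x ∈ B), j s (φ s ⟨x, hB s x hx⟩) = i s x := fun x hx ↦
    (DFunLike.congr_fun (hij s) ⟨x, hx⟩).symm
  let 𝒰 : Ultrafilter (Finset N) := .of atTop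
  have hdom (x : N) : ∀ᶠ s in 𝒰, x ∈ (φ s).domain :=
    ((eventually_ge_atTop {x}).filter_mono (Ultrafilter.of_le _)).mono fun s hs ↦
      hφ s (.inr (Finset.singleton_subset_iff.1 hs))
  let K (s) : Subfield (M s) := Subfield.closure (Set.range fun x ↦ j s (φ s x)) ⊔ constants (M s)
  have hφK (s) (x) : j s (φ s x) ∈ K s :=
    le_sup_left (a := Subfield.closure _) (Subfield.subset_closure ⟨x, rfl⟩)
  obtain ⟨τ, hτ⟩ := exists_hom_of_eventually_mem (fun s ↦ (φ s).postcomp (j s)) hdom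
  have hle : (lift (𝒰 := 𝒰) i).range ≤ subfield K := by
    refine (h.range_le (ι := τ) fun x hx ↦ ?_).trans (sup_le ?_ fun x hx ↦ ?_)
    · exact ((hτ x _).2 (.of_forall fun s _ ↦ hij s x hx)).symm
    · rintro _ ⟨x, rfl⟩
      obtain ⟨a, ha⟩ := mk_surjective (𝒰 := 𝒰) (τ x)
      refine ha ▸ mk_mem_subfield.2 ?_
      filter_upwards [hdom x, (hτ x a).1 ha.symm] with s hs hsa
      exact hsa hs ▸ hφK s ⟨x, hs⟩
    · obtain ⟨a, rfl⟩ := mk_surjective x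
      exact mk_mem_subfield.2 ((mk_mem_constants.1 hx).mono fun s hs ↦
        le_sup_right (a := Subfield.closure _) hs)
  obtain ⟨g, hg⟩ := essFiniteType_iff_exists_closure_eq_top.1 h.essFiniteType
  have hK : ∀ᶠ s in 𝒰, ∀ x ∈ g, i s x ∈ K s := (eventually_all_finset g).2 fun x _ ↦
    mk_mem_subfield.1 (hle ⟨x, rfl⟩)
  obtain ⟨s, hs⟩ := hK.exists
  refine hinj s ((φ s).injective_of_range_le h (hB s) (hij s) ?_)
  exact (DHom.range_le_iff hg).2 fun x hx ↦
    hx.elim (fun hx ↦ hij s x hx ▸ hφK s _) (hs x)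

end

/-! ### Intermediate fields and the tensor square -/

section TensorSquare

variable {k L : Type*} [Field k] [Field L] [Algebra k L]

theorem mem_range_algebraMap_of_tmul_one_eq {x : L} (h : x ⊗ₜ[k] (1 : L) = 1 ⊗ₜ x) :
    x ∈ (algebraMap k L).range := by
  by_contra hx
  have hx' : x ∉ k ∙ (1 : L) := fun hx' ↦ by
    obtain ⟨a, rfl⟩ := Submodule.mem_span_singleton.1 hx'
    exact hx ⟨a, Algebra.algebraMap_eq_smul_one a⟩
  obtain ⟨f, hfx, hf⟩ := Submodule.exists_le_ker_of_notMem hx'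
  have hf1 : f 1 = 0 := hf (Submodule.mem_span_singleton_self 1)
  have h0 : (0 : L) = f x • 1 := by
    simpa [hf1] using congrArg (TensorProduct.rid k L ∘ f.lTensor L) h
  exact smul_ne_zero hfx one_ne_zero h0.symm

/-- The ideal generated by the elements `x ⊗ 1 - 1 ⊗ x` determines the field of these `x`, and
`L ⊗[k] L` is Noetherian. -/
theorem wellFoundedGT_intermediateField [Algebra.EssFiniteType k L] :
    WellFoundedGT (IntermediateField k L) := by
  have : IsNoetherianRing (L ⊗[k] L) := Algebra.EssFiniteType.isNoetherianRing L _
  let δ (x : L) : L ⊗[k] L := x ⊗ₜ 1 - 1 ⊗ₜ x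
  let I (K : IntermediateField k L) : Ideal (L ⊗[k] L) := Ideal.span (δ '' K)
  have hI {K : IntermediateField k L} {x : L} (hx : δ x ∈ I K) : x ∈ K := by
    let f := Algebra.TensorProduct.mapOfCompatibleSMul K k k L L
    have hf (x : L) : f (δ x) = x ⊗ₜ 1 - 1 ⊗ₜ x := map_sub f _ _
    have hker : I K ≤ RingHom.ker f := Ideal.span_le.2 <| by
      rintro _ ⟨a, ha, rfl⟩
      exact (hf a).trans (sub_eq_zero.2 (Algebra.TensorProduct.tmul_one_eq_one_tmul (⟨a, ha⟩ : K)))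
    obtain ⟨a, rfl⟩ :=
      mem_range_algebraMap_of_tmul_one_eq (sub_eq_zero.1 ((hf x).symm.trans (hker hx)))
    exact a.2
  have : StrictMono I := fun K K' h ↦ (Ideal.span_mono (Set.image_mono h.le)).lt_of_not_ge
    fun hle ↦ h.not_ge fun x hx ↦ hI (hle (Ideal.subset_span ⟨x, hx, rfl⟩))
  exact this.wellFoundedGT

theorem isReduced_tensor_adjoin_singleton [CharZero k] (x : L) :
    IsReduced (L ⊗[k] Algebra.adjoin k {x}) := by
  by_cases hx : IsAlgebraic k x
  · rw [← IntermediateField.adjoin_simple_toSubalgebra_of_isAlgebraic hx]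
    have := IntermediateField.isAlgebraic_adjoin_simple hx.isIntegral
    have := IntermediateField.adjoin.finiteDimensional hx.isIntegral
    have := Algebra.FormallyUnramified.of_isSeparable k (IntermediateField.adjoin k {x})
    exact Algebra.FormallyUnramified.isReduced_of_field L (L ⊗[k] IntermediateField.adjoin k {x})
  · let e := (Algebra.TensorProduct.congr .refl
      (Polynomial.algEquivOfTranscendental k x hx)).symm.trans (polyEquivTensor k L).symm
    exact isReduced_of_injective e e.injective

theorem mem_range_algebraMap_of_isNilpotent [CharZero k] {x : L}
    (h : IsNilpotent (x ⊗ₜ[k] (1 : L) - 1 ⊗ₜ x)) : x ∈ (algebraMap k L).range := by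
  have := isReduced_tensor_adjoin_singleton (k := k) x
  let f : L ⊗[k] Algebra.adjoin k {x} →ₐ[L] L ⊗[k] L :=
    Algebra.TensorProduct.map (.id L L) (Algebra.adjoin k {x}).val
  have hf : Function.Injective f :=
    Module.Flat.lTensor_preserves_injective_linearMap (M := L)
      (Algebra.adjoin k {x}).val.toLinearMap Subtype.val_injective
  let y : Algebra.adjoin k {x} := ⟨x, Algebra.self_mem_adjoin_singleton k x⟩
  have hy : f (x ⊗ₜ 1 - 1 ⊗ₜ y) = x ⊗ₜ 1 - 1 ⊗ₜ x := map_sub f _ _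
  rw [← hy, IsNilpotent.map_iff hf, isNilpotent_iff_eq_zero] at h
  rw [h, map_zero, eq_comm, sub_eq_zero] at hy
  exact mem_range_algebraMap_of_tmul_one_eq hy

end TensorSquare

theorem exists_linearCombination_of_mem_sup {N M : Type*} [Field N] [Field M] {ι : Type*}
    {S : Subfield N} (b : Module.Basis ι S N) (f : N →+* M) {Q : Subfield M} (hQ : S.map f ≤ Q)
    {y : M} (hy : y ∈ f.fieldRange ⊔ Q) :
    ∃ p q : ι →₀ Q, Finsupp.linearCombination Q (f ∘ b) q ≠ 0 ∧
      y * Finsupp.linearCombination Q (f ∘ b) q = Finsupp.linearCombination Q (f ∘ b) p := by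
  let A := Algebra.adjoin Q (Set.range f)
  let V := Submodule.span Q (Set.range (f ∘ b))
  have hV : A.toSubmodule ≤ V := by
    rw [Algebra.adjoin_eq_span, ← RingHom.coe_range, ← Subring.coe_toSubmonoid,
      Submonoid.closure_eq, Submodule.span_le]
    rintro _ ⟨x, rfl⟩
    induction b.mem_span x using Submodule.span_induction with
    | mem x hx =>
      obtain ⟨i, rfl⟩ := hx
      exact Submodule.subset_span ⟨i, rfl⟩
    | zero => exact (map_zero f).symm ▸ V.zero_mem
    | add x y _ _ hx hy => exact (map_add f x y).symm ▸ V.add_mem hx hy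
    | smul a x _ hx =>
      have hax : f (a • x) = (⟨f a, hQ ⟨a, a.2, rfl⟩⟩ : Q) • f x := map_mul f _ _
      exact hax ▸ V.smul_mem _ hx
  have hle : f.fieldRange ⊔ Q ≤ (IntermediateField.adjoin Q (Set.range f)).toSubfield :=
    sup_le (IntermediateField.subset_adjoin Q _) fun x hx ↦
      (IntermediateField.adjoin Q _).algebraMap_mem ⟨x, hx⟩
  obtain ⟨q, hq, hq0, hyq⟩ := exists_mul_mem_adjoin (hle hy)
  obtain ⟨q, rfl⟩ := (Finsupp.mem_span_range_iff_exists_finsupp).1 (hV hq)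
  obtain ⟨p, hp⟩ := (Finsupp.mem_span_range_iff_exists_finsupp).1 (hV hyq)
  exact ⟨p, q, hq0, hp.symm⟩

/-! ### Galois correspondence -/

section

variable {A E F M M' N : DFld.{u}}

theorem exists_specialization_of_isSN (hE : IsAlgClosed (constants E)) {B : Subfield N}
    (h : IsSN N.deriv B) {ι : E →ᵈ M} {τ : N →ᵈ M} (hB : ∀ x ∈ B, τ x ∈ ι.range) {t : Finset M}
    (ht : (t : Set M) ⊆ (ι.range ⊔ τ.range : Subfield M)) :
    ∃ (M' : DFld.{u}) (φ : Specialization M M') (hι : ∀ x, ι x ∈ φ.domain) (τ' : N →ᵈ M'),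
      (∀ x (hx : τ x ∈ φ.domain), φ ⟨τ x, hx⟩ = τ' x) ∧ ↑t ⊆ (φ.domain : Set M) ∧
      constants M' ≤ (constants E).map (φ.compDHom ι hι).toRingHom := by
  classical
  obtain ⟨g, hg⟩ := essFiniteType_iff_exists_closure_eq_top.1 h.essFiniteType
  obtain ⟨r, hr⟩ := h.exists_finset_injective
  let s := g.image τ
  have hs : Subfield.closure (ι.range ∪ s : Set M) = ι.range ⊔ τ.range := by
    refine le_antisymm (Subfield.closure_le.2 (Set.union_subset ?_ ?_)) (sup_le ?_ ?_)
    · exact fun x hx ↦ le_sup_left (a := ι.range) hx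
    · rintro _ hx
      obtain ⟨x, -, rfl⟩ := Finset.mem_image.1 hx
      exact le_sup_right (a := ι.range) (τ.mem_range_self x)
    · exact fun x hx ↦ Subfield.subset_closure (.inl hx)
    · exact (DHom.range_le_iff hg).2 fun x hx ↦ Subfield.subset_closure <|
        hx.imp (hB x) fun hx ↦ Finset.mem_image_of_mem τ hx
  have hτ (x : N) : τ x ∈ ι.range ⊔ τ.range := le_sup_right (a := ι.range) (τ.mem_range_self x)
  obtain ⟨M', φ, hι, ht', hc⟩ := exists_specialization hE ι (t := t ∪ (g ∪ r).image τ)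
    (hs ▸ ι.isDiff_range.sup τ.isDiff_range) (by
      rw [hs, Finset.coe_union, Finset.coe_image]
      exact Set.union_subset ht (Set.image_subset_iff.2 fun x _ ↦ hτ x))
  have hBφ : (B : Set N) ⊆ (φ.comap τ).domain := fun x hx ↦ by
    obtain ⟨y, hy⟩ := hB x hx
    exact (hy ▸ hι y : τ x ∈ φ.domain)
  have hgr (x : N) (hx : x ∈ g ∪ r) : x ∈ (φ.comap τ).domain :=
    ht' (Finset.mem_union_right _ (Finset.mem_image_of_mem τ hx))
  obtain ⟨τ', hτ'⟩ := (φ.comap τ).exists_extension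
    (hr M' _ (Set.union_subset hBφ fun x hx ↦ hgr x (Finset.mem_union_right _ hx)))
    (top_le_iff.1 (hg ▸ Subfield.closure_mono
      (Set.union_subset hBφ fun x hx ↦ hgr x (Finset.mem_union_left _ hx))))
  exact ⟨M', φ, hι, τ', fun x hx ↦ (hτ' x hx).symm, fun x hx ↦ ht' (Finset.mem_union_left _ hx), hc⟩

theorem exists_amalgam_of_isSN (hE : IsAlgClosed (constants E)) (i : A →ᵈ E) {j : A →ᵈ N}
    (h : IsSN N.deriv j.range) :
    ∃ (M : DFld.{u}) (ι : E →ᵈ M) (τ : N →ᵈ M), ι.comp i = τ.comp j ∧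
      constants M ≤ (constants E).map ι.toRingHom := by
  obtain ⟨M, ι, τ, hij⟩ := exists_amalgam i j
  have hij' (a : A) : ι (i a) = τ (j a) := DFunLike.congr_fun hij a
  obtain ⟨M', φ, hι, τ', hτ', -, hc⟩ := exists_specialization_of_isSN hE h (ι := ι) (τ := τ)
    (t := ∅) (by rintro _ ⟨a, rfl⟩; exact ⟨i a, hij' a⟩) (by simp)
  refine ⟨M', φ.compDHom ι hι, τ', DHom.ext fun a ↦ ?_, hc⟩
  have ha : τ (j a) ∈ φ.domain := hij' a ▸ hι (i a)
  refine Eq.trans ?_ (hτ' _ ha)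
  exact congrArg φ.toRingHom (Subtype.ext (hij' a))

/-- The differential endomorphisms of `N` fixing `B` pointwise, the analogue of the Galois group.
For strongly normal `N` they are automorphisms, which is not built into the definition. -/
def endsFixing (B : Subfield N) : Set (N →ᵈ N) := {σ | ∀ x ∈ B, σ x = x}

theorem DHom.exists_comp_eq {f : E →ᵈ M} {g : F →ᵈ M} (h : g.range ≤ f.range) :
    ∃ σ : F →ᵈ E, f.comp σ = g := by
  let e : E ≃+* f.range := RingEquiv.ofBijective f.toRingHom.rangeRestrictField
    ⟨RingHom.injective _, f.toRingHom.rangeRestrict_surjective⟩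
  let σ : F →+* E := e.symm.toRingHom.comp
    (g.toRingHom.codRestrict f.range fun x ↦ h (g.mem_range_self x))
  have hσ (x : F) : f (σ x) = g x := congrArg Subtype.val (e.apply_symm_apply _)
  refine ⟨⟨σ, fun x ↦ f.injective ?_⟩, DHom.ext hσ⟩
  exact (hσ _).trans (by rw [g.map_deriv, f.map_deriv, ← hσ]; rfl)

theorem exists_specialization_mem_endsFixing (hN : IsAlgClosed (constants N)) {B : Subfield N}
    (h : IsSN N.deriv B) {ι τ : N →ᵈ M} (hιτ : ∀ x ∈ B, τ x = ι x) {t : Finset M}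
    (ht : (t : Set M) ⊆ (ι.range ⊔ τ.range : Subfield M)) :
    ∃ (M' : DFld.{u}) (φ : Specialization M M') (hι : ∀ x, ι x ∈ φ.domain), ∃ σ ∈ endsFixing B,
      (∀ x (hx : τ x ∈ φ.domain), φ ⟨τ x, hx⟩ = φ ⟨ι (σ x), hι _⟩) ∧ ↑t ⊆ (φ.domain : Set M) ∧
      constants M' ≤ (constants N).map (φ.compDHom ι hι).toRingHom := by
  obtain ⟨M', φ, hι, τ', hτ', ht, hc⟩ := exists_specialization_of_isSN hN h
    (fun x hx ↦ ⟨x, (hιτ x hx).symm⟩) ht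
  have hB : ∀ x ∈ B, τ' x = φ.compDHom ι hι x := fun x hx ↦ by
    have hx' : τ x ∈ φ.domain := hιτ x hx ▸ hι x
    rw [← hτ' x hx']
    exact congrArg φ.toRingHom (Subtype.ext (hιτ x hx))
  have hle : τ'.range ≤ (φ.compDHom ι hι).range := (h.range_le hB).trans <| sup_le le_rfl <|
    hc.trans <| by rintro _ ⟨x, -, rfl⟩; exact ⟨x, rfl⟩
  obtain ⟨σ, hσ⟩ := DHom.exists_comp_eq hle
  have hσ' (x : N) : φ ⟨ι (σ x), hι _⟩ = τ' x := DFunLike.congr_fun hσ x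
  refine ⟨M', φ, hι, σ, fun x hx ↦ ?_, fun x hx ↦ (hτ' x hx).trans (hσ' x).symm, ht, hc⟩
  exact (φ.compDHom ι hι).injective ((hσ' x).trans (hB x hx))

theorem _root_.IsSN.mem_of_forall_apply_eq (hN : IsAlgClosed (constants N)) {B : Subfield N}
    (h : IsSN N.deriv B) {x : N} (hx : ∀ σ ∈ endsFixing B, σ x = x) : x ∈ B := by
  classical
  let A := h.isDiff.toDFld
  let i : A →ᵈ N := h.isDiff.subtype
  let _ := i.toRingHom.toAlgebra
  have : DifferentialAlgebra A N := ⟨fun a ↦ (i.map_deriv a).symm⟩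
  suffices hnil : IsNilpotent (x ⊗ₜ[A] (1 : N) - 1 ⊗ₜ x) by
    obtain ⟨a, rfl⟩ := mem_range_algebraMap_of_isNilpotent hnil
    exact a.2
  by_contra hnil
  obtain ⟨M, φ, hφ⟩ := exists_hom_ne_zero hnil
  let ι := φ.comp (includeLeft A N N)
  let τ := φ.comp (includeRight A N N)
  have hιτ : ∀ y ∈ B, τ y = ι y := fun y hy ↦ congrArg φ
    (Algebra.TensorProduct.tmul_one_eq_one_tmul (⟨y, hy⟩ : A)).symm
  have hne : ι x - τ x ≠ 0 := (map_sub φ _ _).symm.trans_ne hφ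
  let t : Finset M := {ι x, τ x, (ι x - τ x)⁻¹}
  obtain ⟨M', ψ, hι, σ, hσ, hψσ, ht, -⟩ :=
    exists_specialization_mem_endsFixing hN h hιτ (t := t) <| by
    have hιx : ι x ∈ ι.range ⊔ τ.range := le_sup_left (a := ι.range) (ι.mem_range_self x)
    have hτx : τ x ∈ ι.range ⊔ τ.range := le_sup_right (a := ι.range) (τ.mem_range_self x)
    simp [t, Set.insert_subset_iff, hιx, hτx, sub_mem]
  simp only [t, Finset.coe_insert, Finset.coe_singleton, Set.insert_subset_iff,
    Set.singleton_subset_iff, SetLike.mem_coe] at ht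
  have h0 := ψ.apply_ne_zero (sub_mem ht.1 ht.2.1) ht.2.2 hne
  have hψx : ψ ⟨τ x, ht.2.1⟩ = ψ ⟨ι x, ht.1⟩ := by simp only [hψσ, hx σ hσ]
  exact h0 ((map_sub ψ.toRingHom ⟨ι x, ht.1⟩ ⟨τ x, ht.2.1⟩).trans (sub_eq_zero.2 hψx.symm))

namespace Specialization

theorem exists_finset_forall_mem {X : Set M} {Z : Finset M}
    (hZ : ↑Z ⊆ (Subfield.closure X : Set M)) :
    ∃ t : Finset M, ∀ (M' : DFld.{u}) (φ : Specialization M M'), ↑t ⊆ (φ.domain : Set M) →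
      ∀ K : Subfield M', (∀ y (hy : y ∈ φ.domain), y ∈ X → φ ⟨y, hy⟩ ∈ K) →
        ∀ z ∈ Z, ∃ h : z ∈ φ.domain, φ ⟨z, h⟩ ∈ K := by
  classical
  choose! t ht using fun z (hz : z ∈ Subfield.closure X) ↦ exists_finset_mem hz
  refine ⟨Z ∪ Z.biUnion t, fun M' φ hφ K hK z hz ↦ ?_⟩
  have hzφ : z ∈ φ.domain := hφ (Finset.mem_union_left _ hz)
  refine ⟨hzφ, ht z (hZ hz) M' φ (fun y hy ↦ hφ ?_) K hK hzφ⟩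
  exact Finset.mem_union_right _ (Finset.mem_biUnion.2 ⟨z, hz, hy⟩)

theorem apply_mul_eq_of_linearCombination_eq {I : Type*} (φ : Specialization M M')
    {K : Subfield M'} {b : I → φ.domain} (hb : LinearIndependent K fun i ↦ φ (b i))
    {y : φ.domain} (hy : φ y ∈ K) {Q : Subfield M} {p q : I →₀ Q}
    (h : (y : M) * Finsupp.linearCombination Q (fun i ↦ (b i : M)) q =
      Finsupp.linearCombination Q (fun i ↦ (b i : M)) p)
    (hpφ : ∀ i, ↑(p i) ∈ φ.domain) (hp : ∀ i, φ ⟨p i, hpφ i⟩ ∈ K)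
    (hqφ : ∀ i, ↑(q i) ∈ φ.domain) (hq : ∀ i, φ ⟨q i, hqφ i⟩ ∈ K) (i : I) :
    φ y * φ ⟨q i, hqφ i⟩ = φ ⟨p i, hpφ i⟩ := by
  classical
  let P (j : I) : φ.domain := ⟨p j, hpφ j⟩
  let R (j : I) : φ.domain := ⟨q j, hqφ j⟩
  let s := insert i (p.support ∪ q.support)
  have hsum {r : I →₀ Q} (hr : r.support ⊆ s) :
      Finsupp.linearCombination Q (fun i ↦ (b i : M)) r = ∑ j ∈ s, (r j : M) * b j :=
    Finsupp.sum_of_support_subset _ hr _ fun _ _ ↦ zero_smul _ _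
  have hs : ∑ j ∈ s, (y * R j - P j) * b j = 0 := Subtype.ext <| by
    rw [hsum fun j hj ↦ by simp [s, hj], hsum fun j hj ↦ by simp [s, hj]] at h
    simp only [AddSubmonoidClass.coe_finsetSum, MulMemClass.coe_mul, AddSubgroupClass.coe_sub,
      sub_mul, Finset.sum_sub_distrib, ZeroMemClass.coe_zero, mul_assoc, ← Finset.mul_sum, P, R,
      h, sub_self]
  have hK (j : I) : φ (y * R j - P j) ∈ K := by
    rw [map_sub, map_mul]
    exact sub_mem (mul_mem hy (hq j)) (hp j)
  have hs' : ∑ j ∈ s, (⟨φ (y * R j - P j), hK j⟩ : K) • φ (b j) = 0 := by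
    rw [← map_zero φ.toRingHom, ← hs, map_sum]
    exact Finset.sum_congr rfl fun j _ ↦ (map_mul φ.toRingHom _ _).symm
  have h0 := congrArg Subtype.val
    (linearIndependent_iff'.1 hb s _ hs' i (Finset.mem_insert_self _ _))
  exact sub_eq_zero.1 (by rw [← map_mul, ← map_sub]; exact h0)

end Specialization

theorem _root_.IsSN.apply_mem_of_sup_eq_top (hN : IsAlgClosed (constants N)) {B S : Subfield N}
    (h : IsSN N.deriv B) (hS : constants N ≤ S) {x : N} (hx : ∀ σ ∈ endsFixing B, σ x ∈ S)
    {ι ρ : N →ᵈ M} (hιρ : ∀ x ∈ B, ρ x = ι x) (htop : ι.range ⊔ ρ.range = ⊤) :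
    ρ x ∈ S.map ι.toRingHom ⊔ constants M := by
  classical
  let Q := S.map ι.toRingHom ⊔ constants M
  let b := Module.Basis.ofVectorSpace S N
  obtain ⟨p, q, hq, hpq⟩ := exists_linearCombination_of_mem_sup b ι.toRingHom (Q := Q)
    le_sup_left (sup_le_sup_left le_sup_right ι.range (h.range_le hιρ (ρ.mem_range_self x)))
  obtain ⟨i, hi⟩ : ∃ i, q i ≠ 0 := by
    by_contra! hq0
    exact hq (by rw [show q = 0 from Finsupp.ext hq0, map_zero])
  suffices hxi : ρ x * q i = p i from
    eq_div_of_mul_eq (by simpa using hi) hxi ▸ div_mem (p i).2 (q i).2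
  by_contra hne
  let Z := (p.finite_range.toFinset ∪ q.finite_range.toFinset).image Subtype.val
  have hZ : ↑Z ⊆ (Subfield.closure ((S.map ι.toRingHom : Set M) ∪ constants M) : Set M) := by
    rw [Subfield.closure_union, Subfield.closure_eq, Subfield.closure_eq, Finset.coe_image]
    exact Set.image_subset_iff.2 fun c _ ↦ c.2
  obtain ⟨t, ht⟩ := Specialization.exists_finset_forall_mem hZ
  obtain ⟨M', φ, hι, σ, hσ, hφσ, htφ, hc⟩ := exists_specialization_mem_endsFixing hN h hιρ
    (t := t ∪ {ρ x, (ρ x * q i - p i)⁻¹}) fun _ _ ↦ htop ▸ Subfield.mem_top _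
  simp only [Finset.coe_union, Finset.coe_insert, Finset.coe_singleton, Set.union_subset_iff,
    Set.insert_subset_iff, Set.singleton_subset_iff, SetLike.mem_coe] at htφ
  obtain ⟨htφ, hρφ, hinv⟩ := htφ
  have hX : ∀ y (hy : y ∈ φ.domain), y ∈ (S.map ι.toRingHom ∪ constants M : Set M) →
      φ ⟨y, hy⟩ ∈ S.map (φ.compDHom ι hι).toRingHom := by
    rintro y hy (⟨z, hz, rfl⟩ | hyc)
    · exact ⟨z, hz, rfl⟩
    · exact (Subfield.gc_map_comap _).monotone_l hS (hc (φ.apply_mem_constants hy hyc))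
  have hZφ := ht M' φ htφ _ hX
  have hp (j) := hZφ (p j) (Finset.mem_image_of_mem _
    (Finset.mem_union_left _ (p.finite_range.mem_toFinset.2 ⟨j, rfl⟩)))
  have hq (j) := hZφ (q j) (Finset.mem_image_of_mem _
    (Finset.mem_union_right _ (q.finite_range.mem_toFinset.2 ⟨j, rfl⟩)))
  have hmul := φ.apply_mul_eq_of_linearCombination_eq
    ((linearIndependent_map_iff (φ.compDHom ι hι).toRingHom).2 b.linearIndependent)
    (y := ⟨ρ x, hρφ⟩) ⟨σ x, hx σ hσ, (hφσ x hρφ).symm⟩ hpq (fun j ↦ (hp j).1)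
    (fun j ↦ (hp j).2) (fun j ↦ (hq j).1) (fun j ↦ (hq j).2) i
  refine φ.apply_ne_zero (sub_mem (mul_mem hρφ (hq i).1) (hp i).1) hinv (sub_ne_zero.2 hne) ?_
  refine Eq.trans ?_ (sub_eq_zero.2 hmul)
  rw [← map_mul, ← map_sub]
  rfl

theorem _root_.IsSN.apply_mem (hN : IsAlgClosed (constants N)) {B S : Subfield N}
    (h : IsSN N.deriv B) (hS : constants N ≤ S) {x : N} (hx : ∀ σ ∈ endsFixing B, σ x ∈ S)
    {ι ρ : N →ᵈ M} (hιρ : ∀ x ∈ B, ρ x = ι x) : ρ x ∈ S.map ι.toRingHom ⊔ constants M := by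
  have hL := ι.isDiff_range.sup ρ.isDiff_range
  let ι' := ι.codRestrict hL le_sup_left
  let ρ' := ρ.codRestrict hL le_sup_right
  have htop : ι'.range ⊔ ρ'.range = ⊤ := top_le_iff.1 fun z _ ↦
    (Subfield.map_mem_map hL.subtype.toRingHom).1 <| by
      rw [Subfield.map_sup, DHom.map_range, DHom.map_range]
      exact z.2
  have hmem := (Subfield.map_mem_map hL.subtype.toRingHom).2 <|
    h.apply_mem_of_sup_eq_top hN hS hx (ι := ι') (ρ := ρ') (fun y hy ↦ Subtype.ext (hιρ y hy)) htop
  rw [Subfield.map_sup, Subfield.map_map] at hmem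
  exact (sup_le_sup_left hL.subtype.map_constants_le _ : _ ≤ S.map ι.toRingHom ⊔ _) hmem

end

section FiniteGeneration

variable {L : Type*} [Field L] {k K : Subfield L}

theorem essFiniteType_of_le (h : Algebra.EssFiniteType k L) (hkK : k ≤ K) :
    Algebra.EssFiniteType K L := by
  rw [essFiniteType_iff_exists_closure_eq_top] at h ⊢
  obtain ⟨s, hs⟩ := h
  exact ⟨s, top_le_iff.1 (hs ▸ Subfield.closure_mono (Set.union_subset_union_left _ hkK))⟩

theorem essFiniteType_of_fieldRange {F : Type*} [Field F] {B : Subfield F} {j : F →+* L}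
    (h : Algebra.EssFiniteType B F) (hj : Algebra.EssFiniteType j.fieldRange L)
    (hB : B.map j ≤ k) : Algebra.EssFiniteType k L := by
  classical
  rw [essFiniteType_iff_exists_closure_eq_top] at h hj ⊢
  obtain ⟨s, hs⟩ := h
  obtain ⟨t, ht⟩ := hj
  refine ⟨s.image j ∪ t, top_le_iff.1 (ht ▸ Subfield.closure_le.2 (Set.union_subset ?_ ?_))⟩
  · rw [RingHom.fieldRange_eq_map, ← hs, RingHom.map_field_closure]
    refine Subfield.closure_mono ?_
    rw [Set.image_union, Finset.coe_union, Finset.coe_image, ← Set.union_assoc]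
    exact (Set.union_subset_union_left _ hB).trans Set.subset_union_left
  · exact fun x hx ↦ Subfield.subset_closure (.inr (Finset.mem_union_right _ hx))

theorem wellFoundedGT_Ici [Algebra.EssFiniteType k L] : WellFoundedGT (Set.Ici k) := by
  have hmono : StrictMono fun K : Set.Ici k ↦ Subfield.extendScalars (F := k) (E := K.1) K.2 :=
    fun _ _ h ↦ h
  have := wellFoundedGT_intermediateField (k := k) (L := L)
  exact hmono.wellFoundedGT

theorem fg_intermediateField {k : Type*} [Field k] [Algebra k L]
    [WellFoundedGT (IntermediateField k L)] (K : IntermediateField k L) : K.FG := by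
  obtain ⟨V, ⟨hV, hVK⟩, hmax⟩ := wellFounded_gt.has_min
    {V : IntermediateField k L | V.FG ∧ V ≤ K} ⟨⊥, IntermediateField.fg_bot, bot_le⟩
  suffices hKV : K ≤ V from le_antisymm hVK hKV ▸ hV
  intro x hx
  by_contra hxV
  refine hmax (V ⊔ IntermediateField.adjoin k {x}) ⟨?_, ?_⟩ (left_lt_sup.2 fun h ↦ hxV ?_)
  · exact IntermediateField.fg_sup hV
      (IntermediateField.fg_adjoin_of_finite (Set.finite_singleton x))
  · exact sup_le hVK (IntermediateField.adjoin_simple_le_iff.2 hx)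
  · exact h (IntermediateField.mem_adjoin_simple_self k x)

theorem essFiniteType_comap_subtype (h : Algebra.EssFiniteType k L) (hkK : k ≤ K) :
    Algebra.EssFiniteType (k.comap K.subtype) K := by
  have := wellFoundedGT_intermediateField (k := k) (L := L)
  have : Algebra.EssFiniteType k (Subfield.extendScalars hkK) :=
    IntermediateField.essFiniteType_iff.2 (fg_intermediateField _)
  let f : k →+* k.comap K.subtype :=
    (Subfield.inclusion hkK).codRestrict (k.comap K.subtype) fun x ↦ x.2
  exact RingHom.EssFiniteType.of_comp f (g := (k.comap K.subtype).subtype) this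

end FiniteGeneration

/-! ### Strongly normal subextensions -/

section

variable {A E F₁ F₂ M N : DFld.{u}}

theorem isSN_of_sup_eq_top {k₁ : Subfield F₁} {k₂ : Subfield F₂} (h₁ : IsSN F₁.deriv k₁)
    (h₂ : IsSN F₂.deriv k₂) {j₁ : F₁ →ᵈ N} {j₂ : F₂ →ᵈ N} {K : Subfield N} (hK : IsDiff K)
    (hk₁ : k₁.map j₁.toRingHom ≤ K) (hk₂ : k₂.map j₂.toRingHom ≤ K) (hc : constants N ≤ K)
    (htop : K ⊔ (j₁.range ⊔ j₂.range) = ⊤) : IsSN N.deriv K := by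
  classical
  have hK₁ (x) (hx : x ∈ k₁) : j₁ x ∈ K := hk₁ ⟨x, hx, rfl⟩
  have hK₂ (x) (hx : x ∈ k₂) : j₂ x ∈ K := hk₂ ⟨x, hx, rfl⟩
  have : Algebra.EssFiniteType K N := by
    obtain ⟨s₁, hs₁⟩ := essFiniteType_iff_exists_closure_eq_top.1 h₁.essFiniteType
    obtain ⟨s₂, hs₂⟩ := essFiniteType_iff_exists_closure_eq_top.1 h₂.essFiniteType
    refine essFiniteType_iff_exists_closure_eq_top.2 ⟨s₁.image j₁ ∪ s₂.image j₂,
      top_le_iff.1 (htop ▸ sup_le ?_ (sup_le ?_ ?_))⟩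
    · exact fun x hx ↦ Subfield.subset_closure (.inl hx)
    · exact (DHom.range_le_iff hs₁).2 fun x hx ↦ Subfield.subset_closure <| hx.imp (hK₁ x)
        fun hx ↦ Finset.mem_union_left _ (Finset.mem_image_of_mem _ hx)
    · exact (DHom.range_le_iff hs₂).2 fun x hx ↦ Subfield.subset_closure <| hx.imp (hK₂ x)
        fun hx ↦ Finset.mem_union_right _ (Finset.mem_image_of_mem _ hx)
  refine isSN_of_range_le hK hc fun M ι σ hισ ↦ ?_
  have hle {F : DFld.{u}} (j : F →ᵈ N) : (ι.comp j).range ⊔ constants M ≤ ι.range ⊔ constants M :=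
    sup_le_sup_right (by rintro _ ⟨x, rfl⟩; exact ι.mem_range_self _) _
  have hσ : K ⊔ (j₁.range ⊔ j₂.range) ≤ (ι.range ⊔ constants M).comap σ.toRingHom := by
    refine sup_le (fun x hx ↦ ?_) (sup_le ?_ ?_)
    · exact le_sup_left (a := ι.range) ⟨x, (hισ x hx).symm⟩
    · rintro _ ⟨x, rfl⟩
      exact hle j₁ <| h₁.range_le (ι := ι.comp j₁) (σ := σ.comp j₁)
        (fun y hy ↦ hισ _ (hK₁ y hy)) ⟨x, rfl⟩
    · rintro _ ⟨x, rfl⟩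
      exact hle j₂ <| h₂.range_le (ι := ι.comp j₂) (σ := σ.comp j₂)
        (fun y hy ↦ hισ _ (hK₂ y hy)) ⟨x, rfl⟩
  rintro _ ⟨x, rfl⟩
  exact hσ (htop ▸ Subfield.mem_top x)

theorem _root_.IsSN.mono {k K : Subfield N} (h : IsSN N.deriv k) (hK : IsDiff K) (hkK : k ≤ K) :
    IsSN N.deriv K := by
  have hid : (DHom.id N).range = ⊤ := RingHom.fieldRange_eq_top_iff.2 Function.surjective_id
  have hk : k.map (DHom.id N).toRingHom ≤ K := by
    rintro _ ⟨x, hx, rfl⟩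
    exact hkK hx
  exact isSN_of_sup_eq_top h h hK hk hk (h.constants_le.trans hkK) (by simp [hid])

/-- For differential subfields `k ≤ L` of `E`, strong normality of `L` over `k`. It is expressed
through any differential field `F` isomorphic to `L`, so that it is visibly invariant under
homomorphisms. -/
def IsStronglyNormal (k L : Subfield E) : Prop :=
  k ≤ L ∧ ∃ (F : DFld.{u}) (j : F →ᵈ E), j.range = L ∧ IsSN F.deriv (k.comap j.toRingHom)

/-- The differential subfield `L` of `E` embeds over `k` in a strongly normal extension of `k`.
Here `i : A →ᵈ E` is a parametrization of `L` and `ψ : A →ᵈ F` the embedding. -/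
def EmbedsInStronglyNormal (k L : Subfield E) : Prop :=
  k ≤ L ∧ ∃ (A F : DFld.{u}) (i : A →ᵈ E) (ψ : A →ᵈ F), i.range = L ∧
    IsSN F.deriv ((k.comap i.toRingHom).map ψ.toRingHom)

theorem DHom.map_le_range (f : E →ᵈ M) (K : Subfield E) : K.map f.toRingHom ≤ f.range := by
  rintro _ ⟨x, -, rfl⟩
  exact f.mem_range_self x

theorem DHom.map_le_map_iff (f : E →ᵈ M) {K L : Subfield E} :
    K.map f.toRingHom ≤ L.map f.toRingHom ↔ K ≤ L := by
  rw [(Subfield.gc_map_comap f.toRingHom).le_iff_le, Subfield.comap_map]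

theorem DHom.comap_comp_map (f : E →ᵈ M) (i : A →ᵈ E) (K : Subfield E) :
    (K.map f.toRingHom).comap (f.comp i).toRingHom = K.comap i.toRingHom :=
  (Subfield.comap_comap _ _ _).symm.trans (by rw [Subfield.comap_map])

theorem DHom.map_comap_of_comp_eq {f : E →ᵈ M} {g : A →ᵈ M} {i : A →ᵈ E} (h : f.comp i = g)
    {k : Subfield M} (hk : k ≤ g.range) :
    (k.comap g.toRingHom).map i.toRingHom = k.comap f.toRingHom := by
  subst h
  rw [← Subfield.comap_map f.toRingHom (Subfield.map _ _), Subfield.map_map]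
  exact congrArg _ (Subfield.map_comap_eq_self hk)

theorem DHom.exists_comp_eq_of_range_eq_map {f : E →ᵈ M} {g : A →ᵈ M} {L : Subfield E}
    (h : g.range = L.map f.toRingHom) : ∃ i : A →ᵈ E, f.comp i = g ∧ i.range = L := by
  obtain ⟨i, hi⟩ := exists_comp_eq (h.trans_le (f.map_le_range L))
  refine ⟨i, hi, ?_⟩
  rw [← Subfield.comap_map f.toRingHom i.range, i.map_range f, hi, h, Subfield.comap_map]

theorem isStronglyNormal_map_iff (f : E →ᵈ M) {k L : Subfield E} :
    IsStronglyNormal (k.map f.toRingHom) (L.map f.toRingHom) ↔ IsStronglyNormal k L := by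
  refine and_congr f.map_le_map_iff ⟨?_, ?_⟩
  · rintro ⟨F, j, hj, h⟩
    obtain ⟨j, rfl, hL⟩ := DHom.exists_comp_eq_of_range_eq_map hj
    exact ⟨F, j, hL, f.comap_comp_map j k ▸ h⟩
  · rintro ⟨F, j, rfl, h⟩
    exact ⟨F, f.comp j, (j.map_range f).symm, (f.comap_comp_map j k).symm ▸ h⟩

theorem embedsInStronglyNormal_map_iff (f : E →ᵈ M) {k L : Subfield E} :
    EmbedsInStronglyNormal (k.map f.toRingHom) (L.map f.toRingHom) ↔
      EmbedsInStronglyNormal k L := by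
  refine and_congr f.map_le_map_iff ⟨?_, ?_⟩
  · rintro ⟨A, F, i, ψ, hi, h⟩
    obtain ⟨i, rfl, hL⟩ := DHom.exists_comp_eq_of_range_eq_map hi
    exact ⟨A, F, i, ψ, hL, f.comap_comp_map i k ▸ h⟩
  · rintro ⟨A, F, i, ψ, rfl, h⟩
    exact ⟨A, F, f.comp i, ψ, (i.map_range f).symm, (f.comap_comp_map i k).symm ▸ h⟩

theorem IsStronglyNormal.isDiff {k L : Subfield E} (h : IsStronglyNormal k L) : IsDiff L := by
  obtain ⟨-, F, j, rfl, -⟩ := h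
  exact j.isDiff_range

theorem EmbedsInStronglyNormal.isDiff {k L : Subfield E} (h : EmbedsInStronglyNormal k L) :
    IsDiff L := by
  obtain ⟨-, A, F, i, ψ, rfl, -⟩ := h
  exact i.isDiff_range

theorem IsStronglyNormal.embedsInStronglyNormal {k K L : Subfield E} (h : IsStronglyNormal k L)
    (hK : IsDiff K) (hkK : k ≤ K) (hKL : K ≤ L) : EmbedsInStronglyNormal k K := by
  obtain ⟨-, F, j, rfl, h⟩ := h
  obtain ⟨ψ, hψ⟩ := DHom.exists_comp_eq (hK.range_subtype.trans_le hKL)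
  refine ⟨hkK, _, F, hK.subtype, ψ, hK.range_subtype, ?_⟩
  exact DHom.map_comap_of_comp_eq hψ (hkK.trans hK.range_subtype.ge) ▸ h

theorem isAlgClosed_constants_iff (f : E →ᵈ M) (h : constants M ≤ f.range) :
    IsAlgClosed (constants M) ↔ IsAlgClosed (constants E) := by
  let g : constants E →+* constants M :=
    (f.toRingHom.comp (constants E).subtype).codRestrict (constants M) fun x ↦
      f.map_constants_le ⟨x, x.2, rfl⟩
  have hg : Function.Surjective g := by
    rintro ⟨y, hy⟩
    obtain ⟨x, rfl⟩ := h hy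
    exact ⟨⟨x, f.map_mem_constants_iff.1 hy⟩, rfl⟩
  let e := RingEquiv.ofBijective g ⟨g.injective, hg⟩
  exact ⟨fun _ ↦ IsAlgClosed.of_ringEquiv _ _ e.symm, fun _ ↦ IsAlgClosed.of_ringEquiv _ _ e⟩

theorem isStronglyNormal_sup {k₁ : Subfield F₁} {k₂ : Subfield F₂} (h₁ : IsSN F₁.deriv k₁)
    (h₂ : IsSN F₂.deriv k₂) {j₁ : F₁ →ᵈ M} {j₂ : F₂ →ᵈ M} {K : Subfield M} (hK : IsDiff K)
    (hk₁ : k₁.map j₁.toRingHom ≤ K) (hk₂ : k₂.map j₂.toRingHom ≤ K)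
    (hc : constants M ⊓ (K ⊔ (j₁.range ⊔ j₂.range)) ≤ K) :
    IsStronglyNormal K (K ⊔ (j₁.range ⊔ j₂.range)) := by
  have hL := hK.sup (j₁.isDiff_range.sup j₂.isDiff_range)
  refine ⟨le_sup_left, hL.toDFld, hL.subtype, hL.range_subtype, ?_⟩
  refine isSN_of_sup_eq_top h₁ h₂ (j₁ := j₁.codRestrict hL (le_sup_left.trans le_sup_right))
    (j₂ := j₂.codRestrict hL (le_sup_right.trans le_sup_right)) (fun x hx ↦ hK _ hx) ?_ ?_ ?_ ?_
  · rintro _ ⟨x, hx, rfl⟩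
    exact hk₁ ⟨x, hx, rfl⟩
  · rintro _ ⟨x, hx, rfl⟩
    exact hk₂ ⟨x, hx, rfl⟩
  · exact fun x hx ↦ hc ⟨hL.subtype.map_mem_constants_iff.2 hx, x.2⟩
  · refine top_le_iff.1 fun z _ ↦ (Subfield.map_mem_map hL.subtype.toRingHom).1 ?_
    rw [Subfield.map_sup, Subfield.map_sup, DHom.map_range, DHom.map_range,
      Subfield.map_comap_eq_self (le_sup_left.trans hL.range_subtype.ge)]
    exact z.2

theorem IsStronglyNormal.sup_left {k K L : Subfield E} (h : IsStronglyNormal k L) (hK : IsDiff K)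
    (hkK : k ≤ K) (hc : constants E ⊓ (K ⊔ L) ≤ K) : IsStronglyNormal K (K ⊔ L) := by
  obtain ⟨hkL, F, j, rfl, h⟩ := h
  have hk := (Subfield.map_comap_eq_self hkL).trans_le hkK
  simpa only [sup_idem] using isStronglyNormal_sup h h hK hk hk (by rwa [sup_idem])

theorem EmbedsInStronglyNormal.sup (hE : IsAlgClosed (constants E)) {k L₁ L₂ : Subfield E}
    (hk : IsDiff k) (hc : constants E ≤ k) (h₁ : EmbedsInStronglyNormal k L₁)
    (h₂ : EmbedsInStronglyNormal k L₂) : EmbedsInStronglyNormal k (L₁ ⊔ L₂) := by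
  have hL := h₁.isDiff.sup h₂.isDiff
  have hkL : k ≤ L₁ ⊔ L₂ := h₁.1.trans le_sup_left
  obtain ⟨-, A₁, F₁, i₁, ψ₁, rfl, h₁⟩ := h₁
  obtain ⟨-, A₂, F₂, i₂, ψ₂, rfl, h₂⟩ := h₂
  obtain ⟨M₁, ι₁, τ₁, hτ₁, hc₁⟩ := exists_amalgam_of_isSN hE i₁
    (h₁.mono ψ₁.isDiff_range (ψ₁.map_le_range _))
  have hM₁ := (isAlgClosed_constants_iff ι₁ (hc₁.trans (ι₁.map_le_range _))).2 hE
  obtain ⟨M₂, ι₂, τ₂, hτ₂, hc₂⟩ := exists_amalgam_of_isSN hM₁ (ι₁.comp i₂)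
    (h₂.mono ψ₂.isDiff_range (ψ₂.map_le_range _))
  let ι := ι₂.comp ι₁
  let j₁ := ι₂.comp τ₁
  have hj₁ (a : A₁) : j₁ (ψ₁ a) = ι (i₁ a) := congrArg ι₂ (DFunLike.congr_fun hτ₁ a).symm
  have hj₂ (a : A₂) : τ₂ (ψ₂ a) = ι (i₂ a) := (DFunLike.congr_fun hτ₂ a).symm
  have hcM : constants M₂ ≤ k.map ι.toRingHom := by
    refine (hc₂.trans ((Subfield.gc_map_comap _).monotone_l (hc₁.trans ?_))).trans_eq
      (Subfield.map_map _ _ _)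
    exact ι₁.map_le_map_iff.2 hc
  have hN := isStronglyNormal_sup h₁ h₂ (j₁ := j₁) (j₂ := τ₂) (hk.map ι)
    (by rintro _ ⟨_, ⟨a, ha, rfl⟩, rfl⟩; exact ⟨i₁ a, ha, (hj₁ a).symm⟩)
    (by rintro _ ⟨_, ⟨a, ha, rfl⟩, rfl⟩; exact ⟨i₂ a, ha, (hj₂ a).symm⟩) (inf_le_left.trans hcM)
  refine (embedsInStronglyNormal_map_iff ι).1 <|
    hN.embedsInStronglyNormal (hL.map ι) (ι.map_le_map_iff.2 hkL) ?_
  rw [Subfield.map_sup]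
  refine le_trans (sup_le_sup ?_ ?_) le_sup_right
  · rintro _ ⟨_, ⟨a, rfl⟩, rfl⟩
    exact ⟨ψ₁ a, hj₁ a⟩
  · rintro _ ⟨_, ⟨a, rfl⟩, rfl⟩
    exact ⟨ψ₂ a, hj₂ a⟩

theorem IsStronglyNormal.isDiff_left {k L : Subfield N} (h : IsStronglyNormal k L) : IsDiff k := by
  obtain ⟨hkL, F, j, rfl, h⟩ := h
  exact Subfield.map_comap_eq_self hkL ▸ h.isDiff.map j

theorem IsStronglyNormal.constants_inf_le {k L : Subfield N} (h : IsStronglyNormal k L) :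
    constants N ⊓ L ≤ k := by
  obtain ⟨-, F, j, rfl, h⟩ := h
  rintro _ ⟨hx, x, rfl⟩
  exact h.constants_le (j.map_mem_constants_iff.1 hx)

theorem IsStronglyNormal.map_le {k L : Subfield N} (h : IsStronglyNormal k L) {ι σ : N →ᵈ M}
    (hισ : ∀ x ∈ k, σ x = ι x) : L.map σ.toRingHom ≤ L.map ι.toRingHom ⊔ constants M := by
  obtain ⟨-, F, j, rfl, h⟩ := h
  rw [j.map_range, j.map_range]
  exact h.range_le fun x hx ↦ hισ _ hx

theorem IsStronglyNormal.exists_hom_of_linDisjoint {B E₁ K : Subfield N}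
    (h : IsStronglyNormal B E₁) (hc : constants N ≤ E₁) (hK : IsDiff K) (hBK : B ≤ K)
    (hd : LinDisjoint B K E₁) {ι f : N →ᵈ M} (hιf : ∀ x ∈ B, f x = ι x) :
    ∃ (M' : DFld.{u}) (δ : M →ᵈ M') (ρ : N →ᵈ M'), (∀ x ∈ E₁, ρ x = δ (ι x)) ∧
      ∀ x ∈ K, ρ x = δ (f x) := by
  have hf : LinDisjoint (B.map f.toRingHom) (K.map f.toRingHom) (E₁.map ι.toRingHom) := by
    have hcQ : constants M ⊓ f.range ≤ E₁.map f.toRingHom := by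
      rintro _ ⟨hx, x, rfl⟩
      exact ⟨x, hc (f.map_mem_constants_iff.1 hx), rfl⟩
    have hfd := ((linDisjoint_map_iff f.toRingHom).2 hd).trans
      (linDisjoint_sup_constants f.isDiff_range hcQ (f.map_le_range _)) (f.map_le_range _)
    exact hfd.mono le_rfl ((h.map_le fun x hx ↦ (hιf x hx).symm).trans_eq (sup_comm _ _))
  let e := h.isDiff.subtype
  let g := hK.subtype
  let b := h.isDiff_left.subtype
  let i := b.codRestrict h.isDiff (h.isDiff_left.range_subtype.trans_le h.1)
  let j := b.codRestrict hK (h.isDiff_left.range_subtype.trans_le hBK)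
  have hι : (ι.comp e).range = E₁.map ι.toRingHom := by rw [← e.map_range, IsDiff.range_subtype]
  have hg : (f.comp g).range = K.map f.toRingHom := by rw [← g.map_range, IsDiff.range_subtype]
  have hb : b.range = B := IsDiff.range_subtype _
  obtain ⟨M', δ, ρ, hρe, hρg⟩ := LinDisjoint.exists_amalgam (f := e) (g := g) (i := i) (j := j)
    (f' := ι.comp e) (g' := f.comp g) rfl (DHom.ext fun x ↦ (hιf _ x.2).symm)
    (by
      change LinDisjoint b.range _ _
      rwa [hb, IsDiff.range_subtype, IsDiff.range_subtype])
    (by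
      change LinDisjoint (f.comp b).range _ _
      rwa [hι, hg, ← b.map_range, hb])
  exact ⟨M', δ, ρ, fun x hx ↦ (hρe ⟨x, hx⟩).symm, fun x hx ↦ (hρg ⟨x, hx⟩).symm⟩

theorem IsStronglyNormal.apply_mem_of_linDisjoint (hN : IsAlgClosed (constants N))
    {B E₁ K F : Subfield N} (h : IsStronglyNormal B E₁) (hE₁ : IsSN N.deriv E₁) (hK : IsDiff K)
    (hBK : B ≤ K) (hd : LinDisjoint B K E₁) (hcF : constants N ≤ F)
    (hF : ∀ σ ∈ endsFixing E₁, ∀ x ∈ K, σ x ∈ F) {ι τ : N →ᵈ M} (hιτ : ∀ x ∈ B, τ x = ι x)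
    {σ : N →ᵈ N} (hσ : σ ∈ endsFixing E₁) {x : N} (hx : x ∈ K) :
    τ (σ x) ∈ F.map ι.toRingHom ⊔ constants M := by
  obtain ⟨M', δ, ρ, hρE, hρK⟩ := h.exists_hom_of_linDisjoint hE₁.constants_le hK hBK hd
    (ι := ι) (f := τ.comp σ) fun y hy ↦ (congrArg τ (hσ y (h.1 hy))).trans (hιτ y hy)
  refine mem_sup_constants_of_map_mem δ ?_
  have hmem := hE₁.apply_mem hN hcF (hF · · x hx) (ι := δ.comp ι) hρE
  rw [hρK x hx] at hmem
  rw [Subfield.map_map]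
  exact hmem

theorem exists_amalgam₂ (ι σ : A →ᵈ M) (j : A →ᵈ N) :
    ∃ (M' : DFld.{u}) (δ : M →ᵈ M') (ι' σ' : N →ᵈ M'),
      δ.comp ι = ι'.comp j ∧ δ.comp σ = σ'.comp j := by
  obtain ⟨M₁, a, ι₁, hι₁⟩ := exists_amalgam ι j
  obtain ⟨M₂, b, σ₂, hσ₂⟩ := exists_amalgam (a.comp σ) j
  exact ⟨M₂, b.comp a, b.comp ι₁, σ₂, DHom.ext fun x ↦ congrArg b (DFunLike.congr_fun hι₁ x), hσ₂⟩

/-- The strongly normal extension is generated by the conjugates of `K` over `E₁`. -/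
theorem IsStronglyNormal.exists_isStronglyNormal_of_linDisjoint (hN : IsAlgClosed (constants N))
    {B E₁ K : Subfield N} (h : IsStronglyNormal B E₁) (hE₁ : IsSN N.deriv E₁) (hK : IsDiff K)
    (hBK : B ≤ K) (hd : LinDisjoint B K E₁) : ∃ F, K ≤ F ∧ IsStronglyNormal B F := by
  let F : Subfield N := ⨆ σ : endsFixing E₁, K.map σ.1.toRingHom
  have hσF (σ) (hσ : σ ∈ endsFixing E₁) (x) (hx : x ∈ K) : σ x ∈ F :=
    le_iSup (fun σ : endsFixing E₁ ↦ K.map σ.1.toRingHom) ⟨σ, hσ⟩ ⟨x, hx, rfl⟩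
  have hKF : K ≤ F := hσF (DHom.id N) fun _ _ ↦ rfl
  have hF : IsDiff F := isDiff_iSup fun σ ↦ hK.map σ.1
  have hcB : constants N ≤ B := fun x hx ↦ h.constants_inf_le ⟨hx, hE₁.constants_le hx⟩
  refine ⟨F, hKF, hBK.trans hKF, hF.toDFld, hF.subtype, hF.range_subtype, ?_⟩
  have : Algebra.EssFiniteType (B.comap hF.subtype.toRingHom) hF.toDFld := by
    obtain ⟨hBE, A, j, rfl, hA⟩ := h
    exact essFiniteType_comap_subtype (essFiniteType_of_fieldRange hA.essFiniteType
      hE₁.essFiniteType (Subfield.map_comap_eq_self hBE).le) (hBK.trans hKF)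
  refine isSN_of_range_le (fun x hx ↦ h.isDiff_left _ hx)
    (fun x hx ↦ hcB (hF.subtype.map_mem_constants_iff.2 hx)) fun M ι σ hισ ↦ ?_
  obtain ⟨M', δ, ι', τ', hι', hτ'⟩ := exists_amalgam₂ ι σ hF.subtype
  have hτι : ∀ x ∈ B, τ' x = ι' x := fun x hx ↦ by
    let y : hF.toDFld := ⟨x, hKF (hBK hx)⟩
    calc τ' x = δ (σ y) := (DFunLike.congr_fun hτ' y).symm
      _ = δ (ι y) := by rw [hισ y hx]
      _ = ι' x := DFunLike.congr_fun hι' y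
  have hle : F ≤ (F.map ι'.toRingHom ⊔ constants M').comap τ'.toRingHom := by
    refine iSup_le fun τ ↦ ?_
    rintro _ ⟨x, hx, rfl⟩
    exact h.apply_mem_of_linDisjoint hN hE₁ hK hBK hd (hcB.trans (hBK.trans hKF)) hσF hτι τ.2 hx
  rintro _ ⟨x, rfl⟩
  refine mem_sup_constants_of_map_mem δ ?_
  rw [ι.map_range, hι', ← hF.subtype.map_range, IsDiff.range_subtype]
  exact (DFunLike.congr_fun hτ' x : δ (σ x) = τ' (hF.subtype x)) ▸ hle x.2

theorem isDiff_map_iff (f : E →ᵈ M) {K : Subfield E} : IsDiff (K.map f.toRingHom) ↔ IsDiff K := by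
  refine ⟨fun h x hx ↦ ?_, (·.map f)⟩
  obtain ⟨y, hy, hxy⟩ := h (f x) ⟨x, hx, rfl⟩
  exact f.injective (hxy.trans (f.map_deriv x).symm) ▸ hy

theorem EmbedsInStronglyNormal.of_linDisjoint (hE : IsAlgClosed (constants E))
    {k E₁ K L : Subfield E} (hc : constants E ≤ k) (hE₁ : IsStronglyNormal k E₁)
    (hL : EmbedsInStronglyNormal E₁ L) (hK : IsDiff K) (hkK : k ≤ K) (hKL : K ≤ L)
    (hd : LinDisjoint k K E₁) : EmbedsInStronglyNormal k K := by
  obtain ⟨hEL, A, N, i, ψ, rfl, hN⟩ := hL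
  obtain ⟨k, rfl⟩ : ∃ k', Subfield.map i.toRingHom k' = k :=
    ⟨_, Subfield.map_comap_eq_self (hkK.trans hKL)⟩
  obtain ⟨K, rfl⟩ : ∃ K', Subfield.map i.toRingHom K' = K := ⟨_, Subfield.map_comap_eq_self hKL⟩
  obtain ⟨E₁, rfl⟩ : ∃ E', Subfield.map i.toRingHom E' = E₁ := ⟨_, Subfield.map_comap_eq_self hEL⟩
  rw [Subfield.comap_map] at hN
  rw [isStronglyNormal_map_iff, ← isStronglyNormal_map_iff ψ] at hE₁
  rw [linDisjoint_map_iff, ← linDisjoint_map_iff ψ.toRingHom] at hd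
  rw [isDiff_map_iff, ← isDiff_map_iff ψ] at hK
  rw [i.map_le_map_iff, ← ψ.map_le_map_iff] at hkK
  have hA := (isAlgClosed_constants_iff i (hc.trans (i.map_le_range _))).1 hE
  have hcl := (isAlgClosed_constants_iff ψ (hN.constants_le.trans (ψ.map_le_range _))).2 hA
  obtain ⟨F, hKF, hF⟩ := hE₁.exists_isStronglyNormal_of_linDisjoint hcl hN hK hkK hd
  rw [embedsInStronglyNormal_map_iff, ← embedsInStronglyNormal_map_iff ψ]
  exact hF.embedsInStronglyNormal hK hkK hKF

theorem EmbedsInStronglyNormal.exists_isGreatest (hE : IsAlgClosed (constants E))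
    {k L₀ : Subfield E} (hk : IsDiff k) (hc : constants E ≤ k) (hkE : Algebra.EssFiniteType k E)
    (h : EmbedsInStronglyNormal k L₀) :
    ∃ L, IsGreatest {L | EmbedsInStronglyNormal k L} L := by
  have := wellFoundedGT_Ici (k := k) (L := E)
  obtain ⟨L, hL, hmax⟩ := (wellFounded_gt (α := Set.Ici k)).has_min
    {L | EmbedsInStronglyNormal k L.1} ⟨⟨L₀, h.1⟩, h⟩
  refine ⟨L.1, hL, fun L' hL' ↦ ?_⟩
  have hsup : EmbedsInStronglyNormal k (L.1 ⊔ L') := EmbedsInStronglyNormal.sup hE hk hc hL hL'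
  by_contra hle
  exact hmax ⟨L.1 ⊔ L', hsup.1⟩ hsup (left_lt_sup.2 hle : L.1 < L.1 ⊔ L')

theorem IsStronglyNormal.map_eq {k L : Subfield E} (h : IsStronglyNormal k L)
    (hc : constants E ≤ k) {σ : E →ᵈ E} (hσ : σ ∈ endsFixing k) : L.map σ.toRingHom = L := by
  have hid : L.map (DHom.id E).toRingHom = L :=
    SetLike.coe_injective (Set.image_id (L : Set E))
  have hkσ : k ≤ L.map σ.toRingHom := fun x hx ↦ ⟨x, h.1 hx, hσ x hx⟩
  refine le_antisymm ?_ ?_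
  · refine (h.map_le (ι := DHom.id E) hσ).trans ?_
    exact hid.symm ▸ sup_le le_rfl (hc.trans h.1)
  · refine hid.symm.le.trans ((h.map_le (ι := σ) fun x hx ↦ (hσ x hx).symm).trans ?_)
    exact sup_le le_rfl (hc.trans hkσ)

theorem _root_.IsSN.linDisjoint (hE : IsAlgClosed (constants E)) {K L : Subfield E}
    (hK : IsSN E.deriv K) (hL : ∀ σ ∈ endsFixing K, L.map σ.toRingHom ≤ L) :
    LinDisjoint (K ⊓ L) K L :=
  linDisjoint_of_forall_mem (S := endsFixing K) (fun _ hσ ↦ hσ)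
    (fun _ ↦ hK.mem_of_forall_apply_eq hE) fun σ hσ x hx ↦ hL σ hσ ⟨x, hx, rfl⟩

/-- With `L` the greatest extension of `E₁` embedding in a strongly normal extension of `E₁`, the
field looked for is `K ⊓ L`. -/
theorem exists_lt_embedsInStronglyNormal_of_sup_eq_top (hE : IsAlgClosed (constants E))
    {k K E₁ L₁ : Subfield E} (hc : constants E ≤ k) (hkE : Algebra.EssFiniteType k E)
    (hE₁ : IsStronglyNormal k E₁) (hK : IsDiff K) (htop : K ⊔ E₁ = ⊤) (hinf : K ⊓ E₁ = k)
    (hL₁ : EmbedsInStronglyNormal E₁ L₁) (hlt : E₁ < L₁) :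
    ∃ K₁, k < K₁ ∧ K₁ ≤ K ∧ EmbedsInStronglyNormal k K₁ := by
  have hkK : k ≤ K := hinf ▸ inf_le_left
  obtain ⟨L, hL, hmax⟩ := hL₁.exists_isGreatest hE hE₁.isDiff (hc.trans hE₁.1)
    (essFiniteType_of_le hkE hE₁.1)
  have hEK : IsSN E.deriv K := by
    obtain ⟨hkE₁, F, j, rfl, hF⟩ := hE₁
    have hkj := (Subfield.map_comap_eq_self hkE₁).trans_le hkK
    exact isSN_of_sup_eq_top hF hF hK hkj hkj (hc.trans hkK) (by rwa [sup_idem])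
  have hmap {σ} (hσ : σ ∈ endsFixing K) : E₁.map σ.toRingHom = E₁ :=
    hE₁.map_eq hc fun x hx ↦ hσ x (hkK hx)
  have hKE₁ : LinDisjoint k K E₁ := hinf ▸ hEK.linDisjoint hE fun σ hσ ↦ (hmap hσ).le
  have hKL : LinDisjoint (K ⊓ L) K L := hEK.linDisjoint hE fun σ hσ ↦
    hmax (hmap hσ ▸ (embedsInStronglyNormal_map_iff σ).2 hL : EmbedsInStronglyNormal E₁ _)
  have hLE₁ : L ≤ K ⊓ L ⊔ E₁ := by
    refine le_trans (le_inf le_rfl ?_)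
      (hKL.sup_right (Q := K ⊓ L ⊔ E₁) le_sup_left (sup_le inf_le_right hL.1)).inf_le
    exact le_top.trans (htop.ge.trans (sup_le_sup_left le_sup_right K))
  have hkL : k ≤ K ⊓ L := le_inf hkK (hE₁.1.trans hL.1)
  refine ⟨K ⊓ L, hkL.lt_of_not_ge fun hle ↦ ?_, inf_le_left, ?_⟩
  · exact hlt.not_ge ((hmax hL₁).trans (hLE₁.trans (sup_le (hle.trans hE₁.1) le_rfl)))
  · exact .of_linDisjoint hE hc hE₁ hL (hK.inf hL.isDiff) hkL inf_le_right
      (hKE₁.mono inf_le_left le_rfl)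

theorem exists_lt_embedsInStronglyNormal_of_inf_eq (hE : IsAlgClosed (constants E))
    {k K E₁ L₁ : Subfield E} (hc : constants E ≤ k) (hkE : Algebra.EssFiniteType k E)
    (hE₁ : IsStronglyNormal k E₁) (hK : IsDiff K) (hinf : K ⊓ E₁ = k)
    (hL₁ : EmbedsInStronglyNormal E₁ L₁) (hlt : E₁ < L₁) (hle : L₁ ≤ K ⊔ E₁) :
    ∃ K₁, k < K₁ ∧ K₁ ≤ K ∧ EmbedsInStronglyNormal k K₁ := by
  have hX := hK.sup hE₁.isDiff
  have hkX : k ≤ K ⊔ E₁ := hE₁.1.trans le_sup_right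
  let f := hX.subtype
  have hmap {L : Subfield E} (h : L ≤ K ⊔ E₁) : (L.comap f.toRingHom).map f.toRingHom = L :=
    Subfield.map_comap_eq_self (h.trans hX.range_subtype.ge)
  have hmap_lt {L L' : Subfield hX.toDFld} :
      L < L' ↔ L.map f.toRingHom < L'.map f.toRingHom :=
    (lt_iff_lt_of_le_iff_le' f.map_le_map_iff f.map_le_map_iff).symm
  have htop : K.comap f.toRingHom ⊔ E₁.comap f.toRingHom = ⊤ := by
    refine top_le_iff.1 fun z _ ↦ (Subfield.map_mem_map f.toRingHom).1 ?_
    rw [Subfield.map_sup, hmap le_sup_left, hmap le_sup_right]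
    exact z.2
  have hsub := exists_lt_embedsInStronglyNormal_of_sup_eq_top (E := hX.toDFld)
    (k := k.comap f.toRingHom) (L₁ := L₁.comap f.toRingHom)
    ((isAlgClosed_constants_iff f (hc.trans (hkX.trans hX.range_subtype.ge))).1 hE)
    (fun x hx ↦ hc (f.map_mem_constants_iff.2 hx)) (essFiniteType_comap_subtype hkE hkX)
    (htop := htop) (hinf := (Subfield.comap_inf _ _ _).symm.trans (hinf ▸ rfl))
  simp only [← isStronglyNormal_map_iff f, ← embedsInStronglyNormal_map_iff f, hmap_lt,
    ← isDiff_map_iff f, hmap le_sup_left, hmap le_sup_right, hmap hkX, hmap hle] at hsub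
  obtain ⟨K₁, hkK₁, hK₁, h⟩ := hsub hE₁ hK hL₁ hlt
  exact ⟨_, hkK₁, (f.map_le_map_iff.2 hK₁).trans_eq (hmap le_sup_left), h⟩

variable {n : ℕ} {T : Fin (n + 1) → Subfield E}

theorem constants_le_of_tower (hTn : T (Fin.last n) = ⊤)
    (hT : ∀ i : Fin n, IsStronglyNormal (T i.castSucc) (T i.succ)) (i : Fin (n + 1)) :
    constants E ≤ T i := by
  induction i using Fin.reverseInduction with
  | last => exact hTn ▸ le_top
  | cast i ih => exact (le_inf le_rfl ih).trans (hT i).constants_inf_le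

theorem essFiniteType_of_tower (hTn : T (Fin.last n) = ⊤)
    (hT : ∀ i : Fin n, IsStronglyNormal (T i.castSucc) (T i.succ)) (i : Fin (n + 1)) :
    Algebra.EssFiniteType (T i) E := by
  induction i using Fin.reverseInduction with
  | last => exact essFiniteType_iff_exists_closure_eq_top.2 ⟨∅, by simp [hTn]⟩
  | cast i ih =>
    obtain ⟨hle, F, j, hj, h⟩ := hT i
    exact essFiniteType_of_fieldRange h.essFiniteType (hj ▸ ih : Algebra.EssFiniteType j.range E)
      (Subfield.map_comap_eq_self (hle.trans hj.ge)).le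

theorem exists_lt_embedsInStronglyNormal (hE : IsAlgClosed (constants E))
    (hTn : T (Fin.last n) = ⊤)
    (hT : ∀ i : Fin n, IsStronglyNormal (T i.castSucc) (T i.succ)) (i : Fin (n + 1))
    {k K : Subfield E} (hk : IsDiff k) (hK : IsDiff K) (hTk : T i ≤ k) (hkK : k < K) :
    ∃ K₁, k < K₁ ∧ K₁ ≤ K ∧ EmbedsInStronglyNormal k K₁ := by
  induction i using Fin.reverseInduction generalizing k K with
  | last => exact absurd (hkK.trans_le (le_top.trans (hTn.ge.trans hTk))) (lt_irrefl k)
  | cast i ih =>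
    have hc := (constants_le_of_tower hTn hT i.castSucc).trans hTk
    have hE₁ : IsStronglyNormal k (k ⊔ T i.succ) := (hT i).sup_left hk hTk (inf_le_left.trans hc)
    by_cases hinf : K ⊓ (k ⊔ T i.succ) = k
    · have hlt : k ⊔ T i.succ < K ⊔ (k ⊔ T i.succ) := right_lt_sup.2 fun hle ↦
        hkK.ne' ((inf_eq_left.2 hle).symm.trans hinf)
      obtain ⟨L₁, hlt₁, hle₁, hL₁⟩ := ih hE₁.isDiff (hK.sup hE₁.isDiff) le_sup_right hlt
      exact exists_lt_embedsInStronglyNormal_of_inf_eq hE hc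
        (essFiniteType_of_le (essFiniteType_of_tower hTn hT _) hTk) hE₁ hK hinf hL₁ hlt₁ hle₁
    · exact ⟨K ⊓ (k ⊔ T i.succ), (le_inf hkK.le le_sup_left).lt_of_ne' hinf, inf_le_left,
        hE₁.embedsInStronglyNormal (hK.inf hE₁.isDiff) (le_inf hkK.le le_sup_left) inf_le_right⟩

theorem exists_relSeries_embedsInStronglyNormal (hE : IsAlgClosed (constants E))
    (hTn : T (Fin.last n) = ⊤) (hT : ∀ i : Fin n, IsStronglyNormal (T i.castSucc) (T i.succ))
    {k K : Subfield E} (hk : IsDiff k) (hK : IsDiff K) (hTk : T 0 ≤ k) (hkK : k ≤ K) :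
    ∃ s : RelSeries {p : Subfield E × Subfield E | p.1 < p.2 ∧ EmbedsInStronglyNormal p.1 p.2},
      s.head = k ∧ s.last = K := by
  have := essFiniteType_of_tower hTn hT 0
  have := wellFoundedGT_Ici (k := T 0) (L := E)
  lift k to Set.Ici (T 0) using hTk
  induction k using WellFoundedGT.induction with
  | ind k ih =>
    obtain hkK | hkK := hkK.eq_or_lt
    · exact ⟨.singleton _ K, hkK.symm, rfl⟩
    · obtain ⟨K₁, hlt, hle, h⟩ := exists_lt_embedsInStronglyNormal hE hTn hT 0 hk hK k.2 hkK
      obtain ⟨s, hs, hsK⟩ := ih ⟨K₁, k.2.trans hlt.le⟩ hlt h.isDiff hle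
      exact ⟨s.cons k (hs ▸ ⟨hlt, h⟩), s.head_cons _ _, (s.last_cons _ _).trans hsK⟩

theorem EmbedsInStronglyNormal.exists_ringHom {k L : Subfield E}
    (h : EmbedsInStronglyNormal k L) : ∃ (F : DFld.{u}) (ψ : L →+* F),
      (∀ (x : E) (hx : x ∈ L) (hx' : E.deriv x ∈ L), ψ ⟨E.deriv x, hx'⟩ = F.deriv (ψ ⟨x, hx⟩)) ∧
      IsSN F.deriv ((k.comap L.subtype).map ψ) := by
  have hL := h.isDiff
  obtain ⟨hkL, A, F, i, ψ, hi, h⟩ := h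
  obtain ⟨e, he⟩ := DHom.exists_comp_eq (hL.range_subtype.trans_le hi.ge)
  refine ⟨F, (ψ.comp e).toRingHom, fun x hx _ ↦ (ψ.comp e).map_deriv ⟨x, hx⟩, ?_⟩
  have hk := DHom.map_comap_of_comp_eq he (hkL.trans hL.range_subtype.ge)
  rw [← hk, Subfield.map_map] at h
  exact h

end

end DFld

/-- Every intermediate differential field `k ⊂ K ⊆ E` of an iterated
strongly normal extension `E` of `k` can be resolved into a tower
`k = K₀ ⊂ K₁ ⊂ ⋯ ⊂ K_m = K` in which each `Kᵢ` embeds differentially over `Kᵢ₋₁` into a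
strongly normal extension of `Kᵢ₋₁`. -/
theorem stmt2 {E : Type u} [Field E] [CharZero E] (D : Derivation ℤ E E)
    (k K : Subfield E)
    (hk : ∀ x ∈ k, D x ∈ k) (hK : ∀ x ∈ K, D x ∈ K)
    (hC : IsAlgClosed ↥(constantsOf D k))
    (hkK : k < K)
    (n : ℕ) (T : Fin (n + 1) → Subfield E)
    (hT0 : T 0 = k) (hTn : T (Fin.last n) = ⊤)
    (hTmono : ∀ i : Fin n, T i.castSucc ≤ T i.succ)
    (hTdiff : ∀ i, ∀ x ∈ T i, D x ∈ T i)
    (hSN : ∀ i : Fin n, IsSNRel (⇑D) (T i.castSucc) (T i.succ) (hTdiff i.succ)) :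
    ∃ (m : ℕ) (S : Fin (m + 1) → Subfield E),
      S 0 = k ∧ S (Fin.last m) = K ∧
      (∀ i : Fin m, S i.castSucc < S i.succ) ∧
      (∀ i, ∀ x ∈ S i, D x ∈ S i) ∧
      ∀ i : Fin m,
        ∃ (F : DFld.{u}) (ψ : ↥(S i.succ) →+* F.carrier),
          (∀ (x : E) (hx : x ∈ S i.succ) (hx' : D x ∈ S i.succ),
            ψ ⟨D x, hx'⟩ = F.deriv (ψ ⟨x, hx⟩)) ∧
          IsSN F.deriv
            (Subfield.map ψ (Subfield.comap (S i.succ).subtype (S i.castSucc))) := by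
  let E' : DFld.{u} := ⟨E, D, map_add D, fun a b ↦ by simp [mul_comm, add_comm]⟩
  have hT (i : Fin n) : DFld.IsStronglyNormal (E := E') (T i.castSucc) (T i.succ) :=
    ⟨hTmono i, _, DFld.IsDiff.subtype (E := E') (hTdiff i.succ), DFld.IsDiff.range_subtype _, hSN i⟩
  have hck : DFld.constants E' ≤ k := hT0 ▸ DFld.constants_le_of_tower hTn hT 0
  have hE : IsAlgClosed (DFld.constants E') := by
    rwa [show DFld.constants E' = constantsOf D k from
      le_antisymm (fun x hx ↦ ⟨hck hx, hx⟩) fun x hx ↦ hx.2]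
  obtain ⟨s, hs0, hsK⟩ :=
    DFld.exists_relSeries_embedsInStronglyNormal hE hTn hT hk hK hT0.le hkK.le
  have hs0' : DFld.IsDiff (E := E') s.head := hs0 ▸ hk
  exact ⟨s.length, s, hs0, hsK, fun i ↦ (s.step i).1,
    Fin.cases hs0' fun i ↦ (s.step i).2.isDiff, fun i ↦ (s.step i).2.exists_ringHom⟩
end

section
/- Let k be a differential field of characteristic zero whose field of constants C is algebraically closed, and let k ⊆ k̃ ⊆ K ⊆ E be differential fields such that k̃ is an algebraic field extension of k and E is a Picard–Vessiot extension of k for some monic linear differential operator over k. Then for every x ∈ K, x satisfies some monic linear homogeneous differential equation with coefficients in k if and only if x satisfies some monic linear homogeneous differential equation with coefficients in k̃ (that is, T(K|k) = T(K|k̃)). -/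
universe u

/-!
An element is a solution of a monic linear differential equation over a Noetherian differential
ring exactly when it and its derivatives generate a finite module. The coefficients of an equation
over `k̃` generate a finite separable extension `F` of `k`, which is closed under the derivation
because `F` is unramified over `k`. Finiteness of the module over `F` then gives finiteness
over `k`.
-/

section Derivation

variable {R A B : Type*} [CommRing R] [CommRing A] [CommRing B] [Algebra R B] [Algebra A B]

-- Modulo the image of `A`, the derivation `D` becomes `R`-linear on `A`; an unramified
-- `R`-algebra admits no nonzero `R`-linear derivation.
theorem derivation_algebraMap_mem_range_of_formallyUnramified [Algebra R A] [IsScalarTower R A B]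
    [Algebra.FormallyUnramified R A] (D : Derivation ℤ B B)
    (hR : ∀ r : R, D (algebraMap R B r) ∈ (algebraMap A B).range) (a : A) :
    D (algebraMap A B a) ∈ (algebraMap A B).range := by
  let imageA : Submodule A B := LinearMap.range (Algebra.linearMap A B)
  let δ : Derivation ℤ A (B ⧸ imageA) := imageA.mkQ.compDer (D.compAlgebraMap A)
  have δ_apply_eq_zero_iff (b : A) : δ b = 0 ↔ D (algebraMap A B b) ∈ (algebraMap A B).range :=
    Submodule.Quotient.mk_eq_zero imageA
  have δ_algebraMap (r : R) : δ (algebraMap R A r) = 0 := by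
    rw [δ_apply_eq_zero_iff, ← IsScalarTower.algebraMap_apply R A B]
    exact hR r
  let δR : Derivation R A (B ⧸ imageA) :=
    { toFun := δ
      map_add' := map_add δ
      map_smul' := fun r b => by
        rw [Algebra.smul_def, δ.leibniz, δ_algebraMap, smul_zero, add_zero, algebraMap_smul,
          RingHom.id_apply]
      map_one_eq_zero' := δ.map_one_eq_zero
      leibniz' := δ.leibniz }
  have δR_eq_zero : δR = 0 :=
    (KaehlerDifferential.linearMapEquivDerivation R A).symm.injective (Subsingleton.elim _ _)
  exact (δ_apply_eq_zero_iff a).1 (DFunLike.congr_fun δR_eq_zero a)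

theorem derivation_mem_span (D : Derivation ℤ B B)
    (hA : ∀ a : A, D (algebraMap A B a) ∈ (algebraMap A B).range) {s : Set B}
    (hs : ∀ y ∈ s, D y ∈ Submodule.span A s) {w : B} (hw : w ∈ Submodule.span A s) :
    D w ∈ Submodule.span A s := by
  induction hw using Submodule.span_induction with
  | mem y hy => exact hs y hy
  | zero => simp only [map_zero, Submodule.zero_mem]
  | add y z _ _ hy hz => simpa only [map_add] using Submodule.add_mem _ hy hz
  | smul a y hy hDy =>
    obtain ⟨b, hb⟩ := hA a
    have D_smul : D (a • y) = a • D y + b • y := by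
      rw [Algebra.smul_def, D.leibniz, ← hb, smul_eq_mul, smul_eq_mul, mul_comm y,
        ← Algebra.smul_def, ← Algebra.smul_def]
    rw [D_smul]
    exact Submodule.add_mem _ (Submodule.smul_mem _ a hDy) (Submodule.smul_mem _ b hy)

end Derivation

theorem exists_mem_span_range_fin {R M : Type*} [Semiring R] [AddCommMonoid M] [Module R M]
    [IsNoetherian R M] (w : ℕ → M) :
    ∃ n : ℕ, w n ∈ Submodule.span R (Set.range fun i : Fin n => w i) := by
  let initialSpan : ℕ →o Submodule R M :=
    ⟨fun n => Submodule.span R (w '' Set.Iio n), fun _ _ h =>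
      Submodule.span_mono (Set.image_mono (Set.Iio_subset_Iio h))⟩
  obtain ⟨n, stable⟩ := monotone_stabilizes_iff_noetherian.mpr inferInstance initialSpan
  have mem_initialSpan : w n ∈ initialSpan n :=
    stable (n + 1) n.le_succ ▸ Submodule.subset_span ⟨n, n.lt_succ_self, rfl⟩
  have range_eq : (Set.range fun i : Fin n => w i) = w '' Set.Iio n := by
    rw [Set.range_comp' w, Fin.range_val]
  exact ⟨n, range_eq ▸ mem_initialSpan⟩

section IsDFinite

variable {R A : Type*} {E : Type u} [CommRing R] [CommRing A] [Field E] [Algebra R E] [Algebra A E]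

/-- `x` is D-finite over `R` if it satisfies a monic homogeneous linear differential equation
with coefficients in `R`. The base is an `R`-algebra structure rather than a subfield so that
subfields and intermediate fields are treated alike. -/
def IsDFinite (R : Type*) {E : Type u} [CommRing R] [Field E] [Algebra R E] (D : E → E) (x : E) :
    Prop :=
  ∃ (n : ℕ) (a : Fin n → R), LApply D n (fun i => algebraMap R E (a i)) x = 0

/-- The `R`-module generated by `x` and its iterated derivatives; its finiteness characterizes
D-finiteness of `x` without reference to a particular equation. -/
def derivSpan (R : Type*) {E : Type u} [CommRing R] [Field E] [Algebra R E] (D : E → E) (x : E) :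
    Submodule R E :=
  Submodule.span R (Set.range fun n => D^[n] x)

theorem exists_lApply_eq_zero_iff_mem_span (D : E → E) (n : ℕ) (x : E) :
    (∃ a : Fin n → R, LApply D n (fun i => algebraMap R E (a i)) x = 0) ↔
      D^[n] x ∈ Submodule.span R (Set.range fun i : Fin n => D^[i] x) := by
  simp only [Submodule.mem_span_range_iff_exists_fun, LApply, ← Algebra.smul_def]
  constructor
  · rintro ⟨a, ha⟩
    refine ⟨-a, ?_⟩
    simp only [Pi.neg_apply, neg_smul, Finset.sum_neg_distrib]
    exact (eq_neg_of_add_eq_zero_left ha).symm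
  · rintro ⟨c, hc⟩
    refine ⟨-c, ?_⟩
    simp only [Pi.neg_apply, neg_smul, Finset.sum_neg_distrib, hc, add_neg_cancel]

theorem IsDFinite.of_fg_derivSpan [IsNoetherianRing R] {D : E → E} {x : E}
    (h : (derivSpan R D x).FG) : IsDFinite R D x := by
  have : IsNoetherian R (derivSpan R D x) := isNoetherian_of_fg_of_noetherian _ h
  let iterates : ℕ → derivSpan R D x := fun n => ⟨D^[n] x, Submodule.subset_span ⟨n, rfl⟩⟩
  obtain ⟨n, hn⟩ := exists_mem_span_range_fin (R := R) iterates
  refine ⟨n, (exists_lApply_eq_zero_iff_mem_span D n x).2 ?_⟩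
  have image_mem := Submodule.mem_map_of_mem (f := (derivSpan R D x).subtype) hn
  rwa [Submodule.map_span, ← Set.range_comp] at image_mem

theorem IsDFinite.fg_derivSpan {D : Derivation ℤ E E}
    (hR : ∀ r : R, D (algebraMap R E r) ∈ (algebraMap R E).range) {x : E}
    (h : IsDFinite R D x) : (derivSpan R D x).FG := by
  obtain ⟨n, a, ha⟩ := h
  let lower : Set E := Set.range fun i : Fin n => D^[i] x
  have top_mem : D^[n] x ∈ Submodule.span R lower :=
    (exists_lApply_eq_zero_iff_mem_span D n x).1 ⟨a, ha⟩
  have le_mem {i : ℕ} (hi : i ≤ n) : D^[i] x ∈ Submodule.span R lower := by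
    rcases hi.lt_or_eq with hlt | rfl
    exacts [Submodule.subset_span ⟨⟨i, hlt⟩, rfl⟩, top_mem]
  have deriv_lower_mem : ∀ y ∈ lower, D y ∈ Submodule.span R lower := by
    rintro _ ⟨i, rfl⟩
    simpa only [Function.iterate_succ_apply'] using le_mem (Nat.succ_le_of_lt i.2)
  have iterate_mem (m : ℕ) : D^[m] x ∈ Submodule.span R lower := by
    induction m with
    | zero => exact le_mem n.zero_le
    | succ m ih =>
      rw [Function.iterate_succ_apply']
      exact derivation_mem_span D hR deriv_lower_mem ih
  have derivSpan_eq : derivSpan R D x = Submodule.span R lower :=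
    le_antisymm (Submodule.span_le.2 (Set.range_subset_iff.2 iterate_mem))
      (Submodule.span_mono (Set.range_subset_iff.2 fun i => ⟨i, rfl⟩))
  rw [derivSpan_eq]
  exact Submodule.fg_span (Set.finite_range _)

variable [Algebra R A] [IsScalarTower R A E]

theorem IsDFinite.of_finite [IsNoetherianRing R] [Module.Finite R A] {D : Derivation ℤ E E}
    (hA : ∀ a : A, D (algebraMap A E a) ∈ (algebraMap A E).range) {x : E}
    (h : IsDFinite A D x) : IsDFinite R D x := by
  have : Module.Finite A (derivSpan A D x) := Module.Finite.of_fg (h.fg_derivSpan hA)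
  have : Module.Finite R (derivSpan A D x) := Module.Finite.trans A _
  have fg_restrictScalars : ((derivSpan A D x).restrictScalars R).FG := Module.Finite.iff_fg.1 this
  exact .of_fg_derivSpan (fg_restrictScalars.of_le (Submodule.span_le_restrictScalars R A _))

theorem IsDFinite.of_finite_of_formallyUnramified [IsNoetherianRing R] [Module.Finite R A]
    [Algebra.FormallyUnramified R A] {D : Derivation ℤ E E}
    (hR : ∀ r : R, D (algebraMap R E r) ∈ (algebraMap R E).range) {x : E}
    (h : IsDFinite A D x) : IsDFinite R D x := by
  refine h.of_finite (derivation_algebraMap_mem_range_of_formallyUnramified (R := R) D fun r => ?_)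
  obtain ⟨s, hs⟩ := hR r
  exact ⟨algebraMap R A s, by rw [← IsScalarTower.algebraMap_apply, hs]⟩

end IsDFinite

theorem mem_tSet_iff_isDFinite {E : Type u} [Field E] {D : E → E} {k K : Subfield E} {x : E} :
    x ∈ TSet D k K ↔ x ∈ K ∧ IsDFinite k D x := by
  refine and_congr_right fun _ => exists_congr fun n => ?_
  constructor
  · rintro ⟨a, ha, hx⟩
    exact ⟨fun i => ⟨a i, ha i⟩, hx⟩
  · rintro ⟨a, hx⟩
    exact ⟨fun i => a i, fun i => (a i).2, hx⟩

theorem isDFinite_of_lApply_eq_zero_of_isSeparable {k : Type*} {E : Type u} [Field k] [Field E]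
    [Algebra k E] {D : Derivation ℤ E E}
    (hk : ∀ c : k, D (algebraMap k E c) ∈ (algebraMap k E).range) {n : ℕ} {a : Fin n → E}
    (ha : ∀ i, IsSeparable k (a i)) {x : E} (hx : LApply D n a x = 0) : IsDFinite k D x := by
  let F : IntermediateField k E := IntermediateField.adjoin k (Set.range a)
  have : FiniteDimensional k F :=
    IntermediateField.finiteDimensional_adjoin (Set.forall_mem_range.2 fun i => (ha i).isIntegral)
  have : Algebra.IsSeparable k F :=
    (IntermediateField.isSeparable_adjoin_iff_isSeparable k E).2 (Set.forall_mem_range.2 ha)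
  have : Algebra.FormallyUnramified k F := Algebra.FormallyUnramified.of_isSeparable k F
  have isDFinite_F : IsDFinite F D x :=
    ⟨n, fun i => ⟨a i, IntermediateField.subset_adjoin k _ ⟨i, rfl⟩⟩, hx⟩
  exact isDFinite_F.of_finite_of_formallyUnramified hk

theorem stmt5_general {E : Type u} [Field E] (D : Derivation ℤ E E) (k kt K : Subfield E)
    (hk : ∀ x ∈ k, D x ∈ k) (h1 : k ≤ kt) (hsep : ∀ x ∈ kt, IsSeparable k x) :
    TSet D k K = TSet D kt K := by
  ext x
  constructor
  · rintro ⟨hxK, n, a, ha, hx⟩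
    exact ⟨hxK, n, a, fun i => h1 (ha i), hx⟩
  · rintro ⟨hxK, n, a, ha, hx⟩
    have k_stable (c : k) : D (algebraMap k E c) ∈ (algebraMap k E).range :=
      ⟨⟨D c, hk c c.2⟩, rfl⟩
    exact mem_tSet_iff_isDFinite.2
      ⟨hxK, isDFinite_of_lApply_eq_zero_of_isSeparable k_stable (fun i => hsep _ (ha i)) hx⟩

/-- If `k ⊆ k̃ ⊆ K ⊆ E` with `k̃` algebraic over `k` and `E` a
Picard–Vessiot extension of `k`, then `T(K|k) = T(K|k̃)`. -/
theorem stmt5 {E : Type u} [Field E] [CharZero E] (D : Derivation ℤ E E)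
    (k kt K : Subfield E)
    (hk : ∀ x ∈ k, D x ∈ k) (hkt : ∀ x ∈ kt, D x ∈ kt) (hK : ∀ x ∈ K, D x ∈ K)
    (hC : IsAlgClosed ↥(constantsOf D k))
    (h1 : k ≤ kt) (h2 : kt ≤ K)
    (halg : ∀ x ∈ kt, IsAlgebraic ↥k x)
    (hPV : IsPV (⇑D) k ⊤) :
    TSet (⇑D) k K = TSet (⇑D) kt K := by
  exact stmt5_general D k kt K hk h1 fun x hx =>
    (minpoly.irreducible (halg x hx).isIntegral).separable
end
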